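/- Let f, g : (ℝⁿ,0) → (ℝᵐ,0) be Nash map germs. If there exists a C^∞ map τ defined near 0 in ℝⁿ with τ(0)=0 and invertible derivative at 0 such that f∘τ = g on a neighborhood of 0 (i.e., f and g are C^∞ R equivalent), then there exists a Nash diffeomorphism germ τ̃ of (ℝⁿ,0) such that f∘τ̃ = g on a neighborhood of 0 (i.e., f and g are Nash R equivalent). -/

import Mathlib

open scoped Topology

/-- A Nash map germ `f : (ℝⁿ,0) → (ℝᵐ,0)`: real analytic at `0`, `f 0 = 0`, and each
component satisfies a nontrivial polynomial equation near `0`. -/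
def NashGerm {n m : ℕ} (f : (Fin n → ℝ) → (Fin m → ℝ)) : Prop :=
  AnalyticAt ℝ f 0 ∧ f 0 = 0 ∧
    ∀ j : Fin m, ∃ P : MvPolynomial (Fin (n + 1)) ℝ, P ≠ 0 ∧
      ∀ᶠ x : Fin n → ℝ in 𝓝 0, MvPolynomial.eval (Fin.snoc x (f x j)) P = 0

/-- A Nash diffeomorphism germ of `(ℝⁿ,0)`: a Nash map germ whose derivative at `0` is a
linear isomorphism. -/
def NashDiffeoGerm {n : ℕ} (τ : (Fin n → ℝ) → (Fin n → ℝ)) : Prop :=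
  NashGerm τ ∧ ∃ D : (Fin n → ℝ) ≃L[ℝ] (Fin n → ℝ),
    HasFDerivAt τ (D : (Fin n → ℝ) →L[ℝ] (Fin n → ℝ)) 0



open Polynomial in
lemma nash_newton {H : Type*} [CommRing H] (m : Ideal H)
    (hunit : ∀ x ∈ m, IsUnit (1 + x))
    (hens : ∀ p : H[X], p.coeff 0 ∈ m → p.coeff 1 = 1 → ∃ u ∈ m, p.eval u = 0)
    (f : H[X]) (b v : H) (hv : v ∈ m) (hf : f.eval b = (f.derivative.eval b) ^ 2 * v) :
    ∃ w, f.eval (b + v * w) = 0 := by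
  set D := f.derivative.eval b with hD
  set Q := divX (divX (taylor b f)) with hQ
  have hT : taylor b f = (Q * X + C D) * X + C (f.eval b) := by
    have h1 := divX_mul_X_add (divX (taylor b f))
    have h2 := divX_mul_X_add (taylor b f)
    rw [← h2, ← h1]
    simp [hQ, coeff_divX, hD, taylor_coeff_one]
  obtain ⟨u, hu, hpu⟩ := hens (C v + X + X ^ 2 * (Q.comp (C D * X)))
    (by simp [coeff_zero_eq_eval_zero, hv])
    (by
      have : (X ^ 2 * (Q.comp (C D * X))).coeff 1 = 0 := by
        rw [coeff_X_pow_mul']; simp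
      simp [this])
  simp at hpu
  have hun : IsUnit (1 + u * Q.eval (D * u)) := hunit _ (m.mul_mem_right _ hu)
  obtain ⟨w, hw⟩ := hun.exists_right_inv
  have huv : u = v * (- w) := by
    linear_combination (w) * hpu - u * hw
  refine ⟨D * (-w), ?_⟩
  have h3 : (taylor b f).eval (D * u) = f.eval (D * u + b) := by
    rw [taylor_eval, add_comm]
  rw [hT] at h3
  have : b + v * (D * -w) = D * u + b := by rw [huv]; ring
  rw [this, ← h3]
  simp
  rw [hf]
  linear_combination D ^ 2 * hpu


open Polynomial in
lemma aeval_cons_eq {C B : Type*} [CommRing C] [CommRing B] [Algebra C B] {N : ℕ} (t : B)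
    (y : Fin N → B) (F : MvPolynomial (Fin (N + 1)) C) :
    MvPolynomial.aeval (Fin.cons t y : Fin (N + 1) → B) F =
      (MvPolynomial.finSuccEquiv C N F).eval₂ (MvPolynomial.aeval y : _ →ₐ[C] B).toRingHom t := by
  induction F using MvPolynomial.induction_on with
  | C a => simp [MvPolynomial.finSuccEquiv_apply]
  | add p q hp hq => simp [hp, hq]
  | mul_X p i hp =>
    rw [map_mul, map_mul, eval₂_mul, hp]
    congr 1
    refine Fin.cases ?_ (fun j => ?_) i
    · simp [MvPolynomial.finSuccEquiv_X_zero]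
    · simp [MvPolynomial.finSuccEquiv_X_succ]

lemma aeval_sub_mem {C B : Type*} [CommRing C] [CommRing B] [Algebra C B] {σ : Type*}
    (I : Ideal B) (y z : σ → B) (h : ∀ i, z i - y i ∈ I) (F : MvPolynomial σ C) :
    MvPolynomial.aeval z F - MvPolynomial.aeval y F ∈ I := by
  induction F using MvPolynomial.induction_on with
  | C a => simp
  | add p q hp hq =>
    have := I.add_mem hp hq
    convert this using 1; simp; ring
  | mul_X p i hp =>
    have := I.add_mem (I.mul_mem_right (z i) hp) (I.mul_mem_left (MvPolynomial.aeval y p) (h i))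
    convert this using 1; simp; ring

open Polynomial in
lemma coeffs_vanish {R A : Type*} [CommRing R] [CommRing A] [IsDomain A] (φ : R →+* A) (t : A)
    (r : R[X]) (hr : r.eval₂ φ t = 0)
    (hmin : ∀ s : R[X], s.natDegree ≤ r.natDegree → s.eval₂ φ t = 0 → φ s.leadingCoeff = 0) :
    ∀ k, φ (r.coeff k) = 0 := by
  induction hn : r.support.card using Nat.strong_induction_on generalizing r with
  | _ n IH =>
    intro k
    by_cases h0 : r = 0
    · simp [h0]
    have hl := hmin r le_rfl hr
    have he : r.eraseLead.eval₂ φ t = 0 := by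
      have h2 := congrArg (eval₂ φ t) r.eraseLead_add_C_mul_X_pow
      rw [eval₂_add, eval₂_mul, eval₂_C, hl, zero_mul, add_zero, hr] at h2
      exact h2
    have := IH _ (hn ▸ eraseLead_support_card_lt h0) r.eraseLead he
      (fun s hs => hmin s (hs.trans (eraseLead_natDegree_le_aux))) rfl
    by_cases hk : k = r.natDegree
    · rw [hk]; exact hl
    · rw [← eraseLead_coeff_of_ne k hk]; exact this k

open Polynomial in
lemma vanish_transfer {R A H : Type*} [CommRing R] [CommRing A] [IsDomain A] [CommRing H]
    [IsDomain H] (φ : R →+* A) (ψ : R →+* H) (hφψ : ∀ r, φ r = 0 → ψ r = 0) (t : A) (u : H)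
    (f : R[X]) (hf : f.eval₂ φ t = 0) (hfl : φ f.leadingCoeff ≠ 0)
    (hmin : ∀ s : R[X], s.eval₂ φ t = 0 → φ s.leadingCoeff ≠ 0 → f.natDegree ≤ s.natDegree)
    (hu : f.eval₂ ψ u = 0) (hul : ψ f.leadingCoeff ≠ 0) (F : R[X]) (hF : F.eval₂ φ t = 0) :
    F.eval₂ ψ u = 0 := by
  have hpos : 0 < f.natDegree := by
    rw [Nat.pos_iff_ne_zero]
    intro h
    rw [eq_C_of_natDegree_eq_zero h] at hf hfl
    simp at hf hfl
    exact hfl hf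
  induction hn : F.natDegree using Nat.strong_induction_on generalizing F with
  | _ n IH =>
    by_cases hlt : F.natDegree < f.natDegree
    · have := coeffs_vanish φ t F hF (fun s hs hs0 => by
        by_contra hc
        have := hmin s hs0 hc
        omega)
      rw [eval₂_eq_sum_range]
      exact Finset.sum_eq_zero fun i _ => by rw [hφψ _ (this i), zero_mul]
    · push Not at hlt
      have hd := natDegree_cancelLeads_lt_of_natDegree_le_natDegree hlt (by omega)
      have := IH _ (hn ▸ hd) (f.cancelLeads F) (by simp [cancelLeads, hF, hf, eval₂_mul]) rfl
      simp [cancelLeads, hu, eval₂_mul, eval₂_sub] at this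
      rw [Nat.sub_eq_zero_of_le hlt] at this
      simpa [hul] using this

open Polynomial in
lemma nash_tougeron {C A H : Type*} [CommRing C] [CommRing A] [IsDomain A] [CharZero A]
    [Algebra C A] [CommRing H] [IsDomain H] [Algebra C H]
    (hinj : Function.Injective (algebraMap C A)) (m : Ideal H)
    (hunit : ∀ x ∈ m, IsUnit (1 + x))
    (hens : ∀ p : H[X], p.coeff 0 ∈ m → p.coeff 1 = 1 → ∃ u ∈ m, p.eval u = 0) :
    ∀ (N : ℕ) (y : Fin N → A), ∃ (δ : MvPolynomial (Fin N) C)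
      (f : Fin N → MvPolynomial (Fin N) C) (K : ℕ),
      MvPolynomial.aeval y δ ≠ 0 ∧ (∀ i, MvPolynomial.aeval y (f i) = 0) ∧
      ∀ (y' : Fin N → H) (J : Ideal H), J ≤ m → MvPolynomial.aeval y' δ ≠ 0 →
        (∀ i, ∃ j ∈ J, MvPolynomial.aeval y' (f i) = (MvPolynomial.aeval y' δ) ^ K * j) →
        ∃ z : Fin N → H, (∀ i, z i - y' i ∈ J) ∧
          ∀ F : MvPolynomial (Fin N) C, MvPolynomial.aeval y F = 0 → MvPolynomial.aeval z F = 0 := by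
  intro N
  induction N with
  | zero =>
    intro y
    refine ⟨1, fun i => 0, 0, by simp, by simp, ?_⟩
    intro y' J hJ h1 h2
    refine ⟨y', by simp, fun F hF => ?_⟩
    rw [MvPolynomial.eq_C_of_isEmpty F] at hF ⊢
    simp at hF ⊢
    rw [hinj (hF.trans (map_zero _).symm), map_zero]
  | succ N ih =>
    intro yt
    obtain ⟨t, y, rfl⟩ : ∃ (t : A) (y : Fin N → A), yt = Fin.cons t y :=
      ⟨yt 0, Fin.tail yt, (Fin.cons_self_tail yt).symm⟩
    obtain ⟨δ, f, K, hδ, hf, hmain⟩ := ih y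
    have hren : ∀ {B : Type _} [CommRing B] [Algebra C B] (t : B) (y : Fin N → B)
        (F : MvPolynomial (Fin N) C),
        MvPolynomial.aeval (Fin.cons t y : Fin (N + 1) → B) (MvPolynomial.rename Fin.succ F)
          = MvPolynomial.aeval y F := by
      intro B _ _ t y F
      rw [MvPolynomial.aeval_rename]; rfl
    have hren' : ∀ {B : Type _} [CommRing B] [Algebra C B] (t : B) (y : Fin N → B)
        (F : MvPolynomial (Fin N) C),
        MvPolynomial.aeval (Fin.cons t y : Fin (N + 1) → B) (MvPolynomial.rename Fin.succ F)
          = MvPolynomial.aeval y F := by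
      intro B _ _ t y F
      rw [MvPolynomial.aeval_rename]; rfl
    set φ : MvPolynomial (Fin N) C →+* A := (MvPolynomial.aeval y : _ →ₐ[C] A).toRingHom with hφ
    by_cases hS : ∃ s : (MvPolynomial (Fin N) C)[X], s.eval₂ φ t = 0 ∧ φ s.leadingCoeff ≠ 0
    · -- algebraic case
      obtain ⟨g, ⟨hg0, hgl⟩, hgmin⟩ : ∃ g : (MvPolynomial (Fin N) C)[X],
          (g.eval₂ φ t = 0 ∧ φ g.leadingCoeff ≠ 0) ∧ ∀ s : (MvPolynomial (Fin N) C)[X],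
            s.eval₂ φ t = 0 → φ s.leadingCoeff ≠ 0 → g.natDegree ≤ s.natDegree := by
        classical
        have hex : ∃ d, ∃ s : (MvPolynomial (Fin N) C)[X],
          (s.eval₂ φ t = 0 ∧ φ s.leadingCoeff ≠ 0) ∧ s.natDegree = d := by
          obtain ⟨s, hs⟩ := hS; exact ⟨_, s, hs, rfl⟩
        obtain ⟨g, hg, hgd⟩ := Nat.find_spec hex
        refine ⟨g, hg, fun s h1 h2 => ?_⟩
        rw [hgd]
        exact Nat.find_min' hex ⟨s, ⟨h1, h2⟩, rfl⟩
      have hpos : 0 < g.natDegree := by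
        rw [Nat.pos_iff_ne_zero]
        intro h
        rw [eq_C_of_natDegree_eq_zero h] at hg0 hgl
        simp at hg0 hgl
        exact hgl hg0
      have hg' : g.derivative.eval₂ φ t ≠ 0 := by
        intro h0
        have := coeffs_vanish φ t g.derivative h0 (fun s hs hs0 => by
          by_contra hc
          have h1 := hgmin s hs0 hc
          have h2 := natDegree_derivative_lt hpos.ne'
          omega) (g.natDegree - 1)
        rw [coeff_derivative, Nat.sub_add_cancel hpos] at this
        rw [map_mul] at this
        rcases mul_eq_zero.mp this with h | h
        · exact hgl h
        · rw [map_add, map_natCast, map_one] at h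
          exact Nat.cast_add_one_ne_zero _ h
      let G := (MvPolynomial.finSuccEquiv C N).symm g
      let G' := (MvPolynomial.finSuccEquiv C N).symm g.derivative
      let l := g.leadingCoeff
      refine ⟨MvPolynomial.rename Fin.succ δ * MvPolynomial.rename Fin.succ l * G',
        Fin.cons G (fun i => MvPolynomial.rename Fin.succ (f i)), K + 3, ?_, ?_, ?_⟩
      · rw [map_mul, map_mul, hren, hren, aeval_cons_eq]
        simp only [G', AlgEquiv.apply_symm_apply]
        exact mul_ne_zero (mul_ne_zero hδ hgl) hg'
      · intro i
        refine Fin.cases ?_ (fun j => ?_) i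
        · simp only [Fin.cons_zero]
          rw [aeval_cons_eq]
          simp only [G, AlgEquiv.apply_symm_apply]
          exact hg0
        · simp only [Fin.cons_succ]
          rw [hren]; exact hf j
      · intro yt' J hJm hne hmem
        obtain ⟨t', y', rfl⟩ : ∃ (t : H) (y : Fin N → H), yt' = Fin.cons t y :=
          ⟨yt' 0, Fin.tail yt', (Fin.cons_self_tail yt').symm⟩
        set d := MvPolynomial.aeval (Fin.cons t' y' : Fin (N + 1) → H)
          (MvPolynomial.rename Fin.succ δ * MvPolynomial.rename Fin.succ l * G') with hd
        have hd' : d = MvPolynomial.aeval y' δ * MvPolynomial.aeval y' l *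
            g.derivative.eval₂ (MvPolynomial.aeval y' : _ →ₐ[C] H).toRingHom t' := by
          rw [hd, map_mul, map_mul, hren', hren', aeval_cons_eq]
          simp only [G', AlgEquiv.apply_symm_apply]
        set a := MvPolynomial.aeval y' δ
        set b := MvPolynomial.aeval y' l
        set e := g.derivative.eval₂ (MvPolynomial.aeval y' : _ →ₐ[C] H).toRingHom t'
        have hne' : a ≠ 0 ∧ b ≠ 0 ∧ e ≠ 0 := by
          rw [hd'] at hne
          refine ⟨?_, ?_, ?_⟩ <;> rintro h <;> simp [h] at hne
        obtain ⟨z, hz1, hz2⟩ := hmain y' (Ideal.span {d ^ 3} * J)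
          (Ideal.mul_le_right.trans hJm) hne'.1 (fun i => by
            obtain ⟨j, hj, hj2⟩ := hmem i.succ
            refine ⟨(b * e) ^ K * (d ^ 3 * j), Ideal.mul_mem_left _ _
              (Ideal.mul_mem_mul (Ideal.mem_span_singleton_self _) hj), ?_⟩
            simp only [Fin.cons_succ] at hj2
            rw [hren'] at hj2
            rw [hj2, pow_add, hd']; ring)
        have hdiff : ∀ F : MvPolynomial (Fin (N + 1)) C,
            ∃ j ∈ J, MvPolynomial.aeval (Fin.cons t' z : Fin (N + 1) → H) F
              = MvPolynomial.aeval (Fin.cons t' y' : Fin (N + 1) → H) F + d ^ 3 * j := by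
          intro F
          have := aeval_sub_mem (Ideal.span {d ^ 3} * J) (Fin.cons t' y' : Fin (N + 1) → H)
            (Fin.cons t' z : Fin (N + 1) → H) (fun i => by
              refine Fin.cases ?_ (fun j => ?_) i
              · simp
              · simpa using hz1 j) F
          obtain ⟨j, hj, h⟩ := Ideal.mem_span_singleton_mul.mp this
          exact ⟨j, hj, by rw [h]; ring⟩
        set ψ : MvPolynomial (Fin N) C →+* H := (MvPolynomial.aeval z : _ →ₐ[C] H).toRingHom with hψ
        obtain ⟨j1, hj1, hG⟩ := hdiff G
        obtain ⟨j2, hj2, hG'⟩ := hdiff G'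
        obtain ⟨j3, hj3, hl⟩ := hdiff (MvPolynomial.rename Fin.succ l)
        obtain ⟨j0, hj0, hG0⟩ := hmem 0
        simp only [Fin.cons_zero] at hG0
        rw [hG0, aeval_cons_eq] at hG
        simp only [G, AlgEquiv.apply_symm_apply] at hG
        rw [aeval_cons_eq, aeval_cons_eq] at hG'
        simp only [G', AlgEquiv.apply_symm_apply] at hG'
        rw [hren', hren'] at hl
        change g.derivative.eval₂ ψ t' = e + _ at hG'
        change ψ l = b + _ at hl
        change g.eval₂ ψ t' = _ at hG
        have hlne : ψ l ≠ 0 := by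
          rw [hl]
          have hun := hunit (a * e * d ^ 2 * j3) (hJm (J.mul_mem_left _ hj3))
          have : b + d ^ 3 * j3 = b * (1 + a * e * d ^ 2 * j3) := by
            linear_combination (d ^ 2 * j3) * hd'
          rw [this]
          exact mul_ne_zero hne'.2.1 hun.ne_zero
        have hun := hunit (a * b * d ^ 2 * j2) (hJm (J.mul_mem_left _ hj2))
        obtain ⟨w, hw⟩ := hun.exists_right_inv
        have he' : e + d ^ 3 * j2 = e * (1 + a * b * d ^ 2 * j2) := by
            linear_combination (d ^ 2 * j2) * hd'
        rw [he'] at hG'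
        set v := d * (a * b * w) ^ 2 * (d ^ K * j0 + j1) with hv
        have hvJ : v ∈ J := J.mul_mem_left _ (J.add_mem (J.mul_mem_left _ hj0) hj1)
        have hKey : (g.map ψ).eval t' = ((g.map ψ).derivative.eval t') ^ 2 * v := by
          rw [derivative_map, eval_map, eval_map, hG, hG', hv]
          have : d = (e * (1 + a * b * d ^ 2 * j2)) * (a * b * w) := by
            linear_combination hd' - e * (a * b) * hw
          linear_combination (d * (d ^ K * j0 + j1)) *
            (d + (e * (1 + a * b * d ^ 2 * j2)) * (a * b * w)) * this
        obtain ⟨w', hw'⟩ := nash_newton m hunit hens (g.map ψ) t' v (hJm hvJ) hKey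
        refine ⟨Fin.cons (t' + v * w') z, fun i => ?_, fun F hF => ?_⟩
        · refine Fin.cases ?_ (fun j => ?_) i
          · simpa using J.mul_mem_right _ hvJ
          · simpa using (Ideal.mul_le_right : Ideal.span {d ^ 3} * J ≤ J) (hz1 j)
        · rw [aeval_cons_eq] at hF ⊢
          rw [eval_map] at hw'
          exact vanish_transfer φ ψ hz2 t _ g hg0 hgl hgmin hw' hlne _ hF
    · push Not at hS
      refine ⟨MvPolynomial.rename Fin.succ δ,
        Fin.cons 0 (fun i => MvPolynomial.rename Fin.succ (f i)), K, ?_, ?_, ?_⟩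
      · rw [hren]; exact hδ
      · intro i
        refine Fin.cases ?_ (fun j => ?_) i
        · simp
        · simp only [Fin.cons_succ]
          rw [hren]; exact hf j
      · intro yt' J hJm hne hmem
        obtain ⟨t', y', rfl⟩ : ∃ (t : H) (y : Fin N → H), yt' = Fin.cons t y :=
          ⟨yt' 0, Fin.tail yt', (Fin.cons_self_tail yt').symm⟩
        rw [hren'] at hne
        obtain ⟨z, hz1, hz2⟩ := hmain y' J hJm hne (fun i => by
            obtain ⟨j, hj, hj2⟩ := hmem i.succ
            refine ⟨j, hj, ?_⟩
            simp only [Fin.cons_succ] at hj2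
            rw [hren', hren'] at hj2
            exact hj2)
        refine ⟨Fin.cons t' z, fun i => ?_, fun F hF => ?_⟩
        · refine Fin.cases ?_ (fun j => ?_) i
          · simp
          · simpa using hz1 j
        · rw [aeval_cons_eq] at hF ⊢
          have := coeffs_vanish φ t _ hF (fun s _ hs0 => hS s hs0)
          rw [eval₂_eq_sum_range]
          exact Finset.sum_eq_zero fun i _ => by
            have := hz2 _ (this i)
            change MvPolynomial.aeval z _ * _ = 0
            rw [this, zero_mul]


noncomputable section NashFormal

open MvPowerSeries in
/-- Power series all of whose coefficients in degree `< c` vanish. -/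
def ordI (n c : ℕ) : Ideal (MvPowerSeries (Fin n) ℝ) where
  carrier := {a | ∀ d : Fin n →₀ ℕ, d.degree < c → coeff d a = 0}
  add_mem' := by
    intro a b ha hb d hd
    simp [ha d hd, hb d hd]
  zero_mem' := by intro d _; simp
  smul_mem' := by
    classical
    intro r a ha d hd
    rw [smul_eq_mul, coeff_mul]
    refine Finset.sum_eq_zero fun x hx => ?_
    rw [ha x.2, mul_zero]
    rw [Finset.HasAntidiagonal.mem_antidiagonal] at hx
    rw [← hx, map_add] at hd
    omega

open MvPowerSeries in
lemma mem_ordI {n c : ℕ} {a : MvPowerSeries (Fin n) ℝ} :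
    a ∈ ordI n c ↔ ∀ d : Fin n →₀ ℕ, d.degree < c → coeff d a = 0 := Iff.rfl

open MvPowerSeries in
lemma mem_ordI_iff {n c : ℕ} {a : MvPowerSeries (Fin n) ℝ} :
    a ∈ ordI n c ↔ (c : ℕ∞) ≤ a.order := by
  constructor
  · intro h; exact nat_le_order h
  · intro h d hd
    apply coeff_of_lt_order
    exact lt_of_lt_of_le (by exact_mod_cast hd) h

lemma ordI_anti {n c d : ℕ} (h : c ≤ d) : ordI n d ≤ ordI n c := fun _ ha e he => ha e (he.trans_le h)

open MvPowerSeries in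
lemma mem_ordI_one {n : ℕ} {a : MvPowerSeries (Fin n) ℝ} :
    a ∈ ordI n 1 ↔ constantCoeff a = 0 := by
  rw [mem_ordI_iff, Nat.cast_one, one_le_order_iff_constCoeff_eq_zero]

lemma eq_zero_of_ordI {n : ℕ} {a : MvPowerSeries (Fin n) ℝ} (h : ∀ c, a ∈ ordI n c) : a = 0 := by
  ext d
  exact h (d.degree + 1) d (by omega)

open MvPowerSeries in
lemma exists_poly_sub_mem_ordI {n : ℕ} (c : ℕ) (a : MvPowerSeries (Fin n) ℝ) :
    ∃ p : MvPolynomial (Fin n) ℝ, a - (p : MvPowerSeries (Fin n) ℝ) ∈ ordI n c := by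
  refine ⟨truncTotal c a, fun d hd => ?_⟩
  rw [map_sub, MvPolynomial.coeff_coe, coeff_truncTotal a hd, sub_self]

/-- the splitting isomorphism -/
abbrev ee (n : ℕ) : MvPowerSeries (Fin (n+1)) ℝ ≃ₐ[ℝ] PowerSeries (MvPowerSeries (Fin n) ℝ) :=
  MvPowerSeries.finSuccEquiv ℝ n

open MvPowerSeries in
lemma constantCoeff_ee {n : ℕ} (a : MvPowerSeries (Fin (n+1)) ℝ) :
    constantCoeff (PowerSeries.constantCoeff (ee n a)) = constantCoeff a := by
  rw [← coeff_zero_eq_constantCoeff_apply, ← PowerSeries.coeff_zero_eq_constantCoeff_apply,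
    coeff_coeff_finSuccEquiv, Finsupp.cons_zero_zero, coeff_zero_eq_constantCoeff_apply]

open MvPowerSeries in
lemma mem_span_X : ∀ {n : ℕ} {a : MvPowerSeries (Fin n) ℝ}, constantCoeff a = 0 →
    a ∈ Ideal.span (Set.range (X : Fin n → MvPowerSeries (Fin n) ℝ)) := by
  intro n
  induction n with
  | zero =>
    intro a ha
    have : a = 0 := by
      ext d
      rw [Subsingleton.elim d 0]
      simpa using ha
    rw [this]; exact Ideal.zero_mem _
  | succ n ih =>
    intro a ha
    set a0 := PowerSeries.constantCoeff (ee n a) with ha0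
    have h0 : constantCoeff a0 = 0 := by rw [ha0, constantCoeff_ee, ha]
    have h1 := ih h0
    obtain ⟨q, hq⟩ : PowerSeries.X ∣ ee n a - PowerSeries.C a0 := by
      rw [PowerSeries.X_dvd_iff]; simp [ha0]
    have h2 : ee n a = PowerSeries.X * q + PowerSeries.C a0 := by rw [← hq]; ring
    have h3 : a = X 0 * (ee n).symm q + (ee n).symm (PowerSeries.C a0) := by
      apply (ee n).injective
      rw [h2, map_add, map_mul, AlgEquiv.apply_symm_apply, AlgEquiv.apply_symm_apply,
        finSuccEquiv_X_zero]
    rw [h3]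
    refine Ideal.add_mem _ (Ideal.mul_mem_right _ _ (Ideal.subset_span ⟨0, rfl⟩)) ?_
    set φ : MvPowerSeries (Fin n) ℝ →+* MvPowerSeries (Fin (n+1)) ℝ :=
      ((ee n).symm : _ →+* _).comp PowerSeries.C
    have h4 := Ideal.mem_map_of_mem φ h1
    rw [Ideal.map_span] at h4
    refine (Ideal.span_le.2 ?_) h4
    rintro _ ⟨_, ⟨j, rfl⟩, rfl⟩
    refine Ideal.subset_span ⟨j.succ, ?_⟩
    apply (ee n).injective
    simp [φ, finSuccEquiv_X_succ]

open MvPowerSeries in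
lemma maximalIdeal_eq_span (n : ℕ) : IsLocalRing.maximalIdeal (MvPowerSeries (Fin n) ℝ) =
    Ideal.span (Set.range (X : Fin n → MvPowerSeries (Fin n) ℝ)) := by
  apply le_antisymm
  · intro a ha
    apply mem_span_X
    rw [IsLocalRing.mem_maximalIdeal, mem_nonunits_iff, isUnit_iff_constantCoeff] at ha
    simpa using ha
  · rw [Ideal.span_le]
    rintro _ ⟨i, rfl⟩
    simp only [SetLike.mem_coe, IsLocalRing.mem_maximalIdeal, mem_nonunits_iff, isUnit_iff_constantCoeff]
    simp

instance adicComplete_maximal (n : ℕ) :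
    IsAdicComplete (IsLocalRing.maximalIdeal (MvPowerSeries (Fin n) ℝ)) (MvPowerSeries (Fin n) ℝ) := by
  rw [maximalIdeal_eq_span]; infer_instance

open MvPowerSeries in
lemma mem_maximal_iff {n : ℕ} {a : MvPowerSeries (Fin n) ℝ} :
    a ∈ IsLocalRing.maximalIdeal (MvPowerSeries (Fin n) ℝ) ↔ constantCoeff a = 0 := by
  rw [IsLocalRing.mem_maximalIdeal, mem_nonunits_iff, isUnit_iff_constantCoeff]
  simp

lemma degree_cons_nash {n : ℕ} (k : ℕ) (d : Fin n →₀ ℕ) : (d.cons k).degree = k + d.degree := by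
  simp [Finsupp.degree_eq_sum, Fin.sum_univ_succ]

/-- ordI through ee -/
lemma mem_ordI_ee {n c : ℕ} {a : MvPowerSeries (Fin (n+1)) ℝ} :
    a ∈ ordI (n+1) c ↔ ∀ k, PowerSeries.coeff k (ee n a) ∈ ordI n (c - k) := by
  constructor
  · intro h k d hd
    rw [MvPowerSeries.coeff_coeff_finSuccEquiv]
    apply h
    rw [degree_cons_nash]
    omega
  · intro h d hd
    have := h (d 0) d.tail (by
      have h2 := degree_cons_nash (d 0) d.tail
      rw [Finsupp.cons_tail] at h2
      omega)
    rw [MvPowerSeries.coeff_coeff_finSuccEquiv, Finsupp.cons_tail] at this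
    exact this

/-- Weierstrass: if `a` distinguished monic and `a ∣ r` in power series with deg small, `r = 0`. -/
lemma dist_dvd_eq_zero {n : ℕ} {a : Polynomial (MvPowerSeries (Fin n) ℝ)}
    (ha : a.IsDistinguishedAt (IsLocalRing.maximalIdeal _))
    {r : Polynomial (MvPowerSeries (Fin n) ℝ)} (hr : r.degree < a.degree)
    (q : PowerSeries (MvPowerSeries (Fin n) ℝ)) (h : (a : PowerSeries (MvPowerSeries (Fin n) ℝ)) * q = r) : r = 0 := by
  have hne : IsLocalRing.maximalIdeal (MvPowerSeries (Fin n) ℝ) ≠ ⊤ := Ideal.IsPrime.ne_top'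
  have h1 := ha.isWeierstrassDivisorAt hne
  refine (h1.eq_zero_of_mul_eq ?_ h).2
  have h2 := ha.coe_natDegree_eq_order_map (a : PowerSeries (MvPowerSeries (Fin n) ℝ)) 1 (by simp) (by simp)
  rw [← h2]
  rw [Polynomial.degree_eq_natDegree ha.monic.ne_zero] at hr
  simpa using hr


/-- images of the variables under the shear -/
def shearV (n : ℕ) (c : Fin n → ℝ) : Fin (n+1) → MvPolynomial (Fin (n+1)) ℝ :=
  Fin.cases (MvPolynomial.X 0) (fun j => MvPolynomial.X j.succ + MvPolynomial.C (c j) * MvPolynomial.X 0)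

/-- shear on polynomials -/
def shearP (n : ℕ) (c : Fin n → ℝ) :
    MvPolynomial (Fin (n+1)) ℝ →ₐ[ℝ] MvPolynomial (Fin (n+1)) ℝ := MvPolynomial.aeval (shearV n c)

lemma shearP_shearP {n : ℕ} (c d : Fin n → ℝ) (h : ∀ i, c i + d i = 0) (p) :
    shearP n c (shearP n d p) = p := by
  suffices ((shearP n c).comp (shearP n d)) = AlgHom.id ℝ _ from DFunLike.congr_fun this p
  apply MvPolynomial.algHom_ext
  intro i
  refine Fin.cases ?_ (fun j => ?_) i
  · simp [shearP, shearV]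
  · have : MvPolynomial.C (c j) + MvPolynomial.C (d j) = (0 : MvPolynomial (Fin (n+1)) ℝ) := by
      rw [← map_add, h, map_zero]
    simp [shearP, shearV, MvPolynomial.algebraMap_eq]
    linear_combination MvPolynomial.X 0 * this

lemma shear_hasSubst (n : ℕ) (c : Fin n → ℝ) :
    MvPowerSeries.HasSubst (fun i => (shearV n c i : MvPowerSeries (Fin (n+1)) ℝ)) := by
  apply MvPowerSeries.hasSubst_of_constantCoeff_zero
  intro i
  refine Fin.cases ?_ (fun j => ?_) i <;> simp [shearV]

/-- shear on power series -/
def shearS (n : ℕ) (c : Fin n → ℝ) :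
    MvPowerSeries (Fin (n+1)) ℝ →ₐ[ℝ] MvPowerSeries (Fin (n+1)) ℝ :=
  MvPowerSeries.substAlgHom (shear_hasSubst n c)

lemma shearS_coe {n : ℕ} (c : Fin n → ℝ) (p : MvPolynomial (Fin (n+1)) ℝ) :
    shearS n c p = (shearP n c p : MvPolynomial (Fin (n+1)) ℝ) := by
  rw [shearS, MvPowerSeries.substAlgHom_coe, shearP]
  have : (MvPolynomial.aeval (fun i => (shearV n c i : MvPowerSeries (Fin (n+1)) ℝ)))
    = (MvPolynomial.coeToMvPowerSeries.algHom (R := ℝ) (σ := Fin (n+1)) ℝ).comp (MvPolynomial.aeval (shearV n c)) := by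
    apply MvPolynomial.algHom_ext
    intro i
    simp [MvPolynomial.coeToMvPowerSeries.algHom_apply]
  rw [this]
  simp [MvPolynomial.coeToMvPowerSeries.algHom_apply]

lemma shearS_ordI {n : ℕ} (c : Fin n → ℝ) {k : ℕ} {a : MvPowerSeries (Fin (n+1)) ℝ}
    (h : a ∈ ordI (n+1) k) : shearS n c a ∈ ordI (n+1) k := by
  rw [mem_ordI_iff] at h ⊢
  rw [shearS, MvPowerSeries.substAlgHom_apply]
  refine le_trans ?_ (MvPowerSeries.le_order_subst (shear_hasSubst n c) a)
  refine h.trans ?_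
  have h1 : (1 : ℕ∞) ≤ ⨅ i, ((shearV n c i : MvPowerSeries (Fin (n+1)) ℝ)).order := by
    refine le_iInf fun i => ?_
    rw [MvPowerSeries.one_le_order_iff_constCoeff_eq_zero]
    refine Fin.cases ?_ (fun j => ?_) i <;> simp [shearV]
  calc a.order = 1 * a.order := (one_mul _).symm
    _ ≤ _ := mul_le_mul_left h1 _

lemma shearS_shearS {n : ℕ} (c d : Fin n → ℝ) (h : ∀ i, c i + d i = 0) (a) :
    shearS n c (shearS n d a) = a := by
  rw [← sub_eq_zero]
  apply eq_zero_of_ordI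
  intro k
  obtain ⟨p, hp⟩ := exists_poly_sub_mem_ordI k a
  have h1 := shearS_ordI c (shearS_ordI d hp)
  rw [map_sub, map_sub, shearS_coe, shearS_coe, shearP_shearP c d h] at h1
  have h2 := sub_mem h1 hp
  simpa using h2

lemma exists_shear_regular {n : ℕ} {a : MvPowerSeries (Fin (n+1)) ℝ} (ha : a ≠ 0) :
    ∃ c : Fin n → ℝ, (ee n (shearS n c a)).map (IsLocalRing.residue _) ≠ 0 := by
  classical
  obtain ⟨d0, hd0, hdeg⟩ := MvPowerSeries.exists_coeff_ne_zero_and_order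
    (MvPowerSeries.ne_zero_iff_order_finite.1 ha)
  set d := d0.degree with hd
  have haord : a ∈ ordI (n+1) d := by rw [mem_ordI_iff, hdeg]
  set p := MvPowerSeries.truncTotal (d+1) a with hp
  have hap : a - p ∈ ordI (n+1) (d+1) := by
    intro e he
    rw [map_sub, MvPolynomial.coeff_coe, MvPowerSeries.coeff_truncTotal a he, sub_self]
  have hphom : p.IsHomogeneous d := by
    intro e he
    rw [hp, MvPowerSeries.coeff_truncTotal_eq_ite] at he
    split_ifs at he with h1
    · by_contra h2
      apply he
      apply haord
      rw [show Finsupp.weight 1 e = e.degree from by rw [Finsupp.degree_eq_weight_one]; rfl] at h2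
      omega
    · exact absurd rfl he
  have hp0 : p ≠ 0 := by
    intro h
    apply hd0
    have := hap d0 (by omega)
    rw [h] at this
    simpa using this
  obtain ⟨x, hx⟩ : ∃ x, MvPolynomial.eval x (MvPolynomial.X 0 * p) ≠ 0 := by
    by_contra! hcon
    exact mul_ne_zero (MvPolynomial.X_ne_zero 0) hp0 (MvPolynomial.funext (by simpa using hcon))
  rw [map_mul, MvPolynomial.eval_X] at hx
  have hx0 := left_ne_zero_of_mul hx
  have hxp := right_ne_zero_of_mul hx
  refine ⟨fun j => x j.succ / x 0, ?_⟩
  set c : Fin n → ℝ := fun j => x j.succ / x 0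
  have hq : (shearP n c p).IsHomogeneous d := by
    have := hphom.aeval (shearV n c) (n := 1) (by
      intro i
      refine Fin.cases ?_ (fun j => ?_) i
      · exact MvPolynomial.isHomogeneous_X _ _
      · refine (MvPolynomial.isHomogeneous_X _ _).add ?_
        simpa using (MvPolynomial.isHomogeneous_C (Fin (n+1)) (c j)).mul (MvPolynomial.isHomogeneous_X ℝ 0))
    rw [one_mul] at this
    exact this
  have hne : MvPolynomial.eval (Fin.cons (x 0) 0 : Fin (n+1) → ℝ) (shearP n c p) ≠ 0 := by
    have h1 : MvPolynomial.eval (Fin.cons (x 0) 0 : Fin (n+1) → ℝ) (shearP n c p)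
        = MvPolynomial.eval x p := by
      have : ((MvPolynomial.aeval (R := ℝ) (Fin.cons (x 0) 0 : Fin (n+1) → ℝ)).comp (shearP n c))
         = MvPolynomial.aeval (R := ℝ) x := by
        apply MvPolynomial.algHom_ext
        intro i
        refine Fin.cases ?_ (fun j => ?_) i
        · simp [shearP, shearV]
        · simp [shearP, shearV, c, hx0]
      exact DFunLike.congr_fun this p
    rwa [h1]
  have hco : MvPolynomial.coeff (Finsupp.single 0 d) (shearP n c p) ≠ 0 := by
    intro h
    apply hne
    rw [MvPolynomial.eval_eq]
    refine Finset.sum_eq_zero fun e he => ?_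
    by_cases hj : ∃ j : Fin n, e j.succ ≠ 0
    · obtain ⟨j, hj⟩ := hj
      rw [Finset.prod_eq_zero (i := j.succ)]
      · simp
      · simpa using hj
      · simp [hj]
    · push Not at hj
      have h1 : e = Finsupp.single 0 (e 0) := by
        ext i
        refine Fin.cases ?_ (fun j => ?_) i
        · simp
        · simp [hj]
      have h2 := hq (MvPolynomial.mem_support_iff.1 he)
      rw [h1] at h2
      simp [Finsupp.weight_single] at h2
      rw [h1, h2, h, zero_mul]
  intro hres
  have h3 : PowerSeries.coeff d (ee n (shearS n c a)) ∈ IsLocalRing.maximalIdeal _ := by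
    have := congrArg (PowerSeries.coeff d) hres
    simpa [IsLocalRing.residue_eq_zero_iff] using this
  rw [mem_maximal_iff, ← MvPowerSeries.coeff_zero_eq_constantCoeff_apply,
    MvPowerSeries.coeff_coeff_finSuccEquiv] at h3
  have h4 := shearS_ordI c hap (Finsupp.cons d 0) (by rw [degree_cons_nash]; simp)
  rw [map_sub, map_sub, h3, shearS_coe, MvPolynomial.coeff_coe, zero_sub, neg_eq_zero] at h4
  apply hco
  convert h4 using 2
  ext i
  refine Fin.cases ?_ (fun j => ?_) i <;> simp

end NashFormal


noncomputable section NashArtin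

/-- Abstract properties of the rings of algebraic (convergent) power series. -/
structure NashSys where
  Na : ∀ n, Subalgebra (MvPolynomial (Fin n) ℝ) (MvPowerSeries (Fin n) ℝ)
  emb : ∀ n a, a ∈ Na n → (ee n).symm (PowerSeries.C a) ∈ Na (n+1)
  shear : ∀ n c a, a ∈ Na (n+1) → shearS n c a ∈ Na (n+1)
  hens : ∀ n (p : Polynomial (MvPowerSeries (Fin n) ℝ)), (∀ i, p.coeff i ∈ Na n) →
    MvPowerSeries.constantCoeff (p.coeff 0) = 0 → MvPowerSeries.constantCoeff (p.coeff 1) ≠ 0 →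
    ∃ u ∈ Na n, MvPowerSeries.constantCoeff u = 0 ∧ p.eval u = 0

/-- tuple version of approximation -/
def ArtinT (S : NashSys) (n : ℕ) : Prop :=
  ∀ (N : ℕ) (y : Fin N → MvPowerSeries (Fin n) ℝ) (c : ℕ), ∃ z : Fin N → MvPowerSeries (Fin n) ℝ,
    (∀ i, z i ∈ S.Na n ∧ z i - y i ∈ ordI n c) ∧
    ∀ F : MvPolynomial (Fin N) (MvPolynomial (Fin n) ℝ), MvPolynomial.aeval y F = 0 →
      MvPolynomial.aeval z F = 0

lemma algebraMap_eq_coe {n : ℕ} (p : MvPolynomial (Fin n) ℝ) :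
    algebraMap (MvPolynomial (Fin n) ℝ) (MvPowerSeries (Fin n) ℝ) p = p := by
  rw [MvPowerSeries.algebraMap_apply']
  ext; simp

lemma artinT_hom {S : NashSys} {n : ℕ} (h : ArtinT S n)
    (D : Subalgebra (MvPolynomial (Fin n) ℝ) (MvPowerSeries (Fin n) ℝ)) (hD : D.FG) (c : ℕ) :
    ∃ ψ : D →ₐ[MvPolynomial (Fin n) ℝ] MvPowerSeries (Fin n) ℝ,
      ∀ d, ψ d ∈ S.Na n ∧ ψ d - d ∈ ordI n c := by
  obtain ⟨s, hs⟩ := hD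
  let y : Fin s.card → MvPowerSeries (Fin n) ℝ := fun i => s.equivFin.symm i
  have hy : Set.range y = s := by
    ext x; constructor
    · rintro ⟨i, rfl⟩; exact (s.equivFin.symm i).2
    · intro hx; exact ⟨s.equivFin ⟨x, hx⟩, by simp [y]⟩
  have hD2 : D = (MvPolynomial.aeval (R := MvPolynomial (Fin n) ℝ) y).range := by
    rw [← hs, ← hy, Algebra.adjoin_range_eq_range_aeval]
  subst hD2
  obtain ⟨z, hz, hF⟩ := h s.card y c
  let ψ := (Ideal.Quotient.liftₐ (RingHom.ker (MvPolynomial.aeval (R := MvPolynomial (Fin n) ℝ) y))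
    (MvPolynomial.aeval (R := MvPolynomial (Fin n) ℝ) z) (fun F h => hF F h)).comp
      (Ideal.quotientKerEquivRange (MvPolynomial.aeval (R := MvPolynomial (Fin n) ℝ) y)).symm.toAlgHom
  refine ⟨ψ, ?_⟩
  rintro ⟨_, F, rfl⟩
  have h1 : ψ ⟨MvPolynomial.aeval y F, ⟨F, rfl⟩⟩ = MvPolynomial.aeval z F := by
    have : (Ideal.quotientKerEquivRange (MvPolynomial.aeval (R := MvPolynomial (Fin n) ℝ) y)).symm
        ⟨MvPolynomial.aeval y F, ⟨F, rfl⟩⟩ = Ideal.Quotient.mk _ F := by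
      rw [AlgEquiv.symm_apply_eq]
      rfl
    simp only [ψ, AlgHom.comp_apply]
    erw [this]
    rfl
  constructor
  · erw [h1]
    have : MvPolynomial.aeval z F =
        (((MvPolynomial.aeval (fun i => (⟨z i, (hz i).1⟩ : S.Na n)) F) : S.Na n) :
          MvPowerSeries (Fin n) ℝ) := by
      rw [← Subalgebra.val_apply, MvPolynomial.comp_aeval_apply]
      rfl
    rw [this]; exact Subtype.prop _
  · erw [h1]
    exact aeval_sub_mem _ _ _ (fun i => (hz i).2) F

lemma nash_inv (S : NashSys) {n : ℕ} {a : MvPowerSeries (Fin n) ℝ} (ha : a ∈ S.Na n)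
    (h0 : MvPowerSeries.constantCoeff a ≠ 0) : ∃ b ∈ S.Na n, a * b = 1 := by
  have hC : ∀ r : ℝ, MvPowerSeries.C r ∈ S.Na n := fun r => by
    have := (S.Na n).algebraMap_mem (MvPolynomial.C r)
    rw [algebraMap_eq_coe] at this
    simpa using this
  set r := (MvPowerSeries.constantCoeff a)⁻¹ with hr
  obtain ⟨u, hu, -, h⟩ := S.hens n (Polynomial.C a * Polynomial.X +
      Polynomial.C (a * MvPowerSeries.C r - 1)) (by
    intro i
    rw [Polynomial.coeff_add, Polynomial.coeff_C_mul, Polynomial.coeff_X, Polynomial.coeff_C]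
    refine add_mem (mul_mem ha ?_) ?_
    · split_ifs
      exacts [one_mem _, zero_mem _]
    · split_ifs
      exacts [sub_mem (mul_mem ha (hC r)) (one_mem _), zero_mem _]) (by
      simp [hr, h0]) (by simpa [Polynomial.coeff_one, Polynomial.coeff_C] using h0)
  refine ⟨u + MvPowerSeries.C r, add_mem hu (hC r), ?_⟩
  simp at h
  linear_combination h

/-- evaluation of polynomials over `D` as power series in one more variable -/
def iot {n : ℕ} {D : Subalgebra (MvPolynomial (Fin n) ℝ) (MvPowerSeries (Fin n) ℝ)}
    (φ : D →ₐ[MvPolynomial (Fin n) ℝ] MvPowerSeries (Fin n) ℝ) :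
    Polynomial D →+* MvPowerSeries (Fin (n+1)) ℝ :=
  ((ee n).symm : PowerSeries (MvPowerSeries (Fin n) ℝ) →+* _).comp
    (Polynomial.coeToPowerSeries.ringHom.comp (Polynomial.mapRingHom (φ : D →+* _)))

/-- polynomials in n+1 variables as polynomials over `D` -/
def tht {n : ℕ} (D : Subalgebra (MvPolynomial (Fin n) ℝ) (MvPowerSeries (Fin n) ℝ)) :
    MvPolynomial (Fin (n+1)) ℝ →+* Polynomial D :=
  (Polynomial.mapRingHom (algebraMap (MvPolynomial (Fin n) ℝ) D)).comp
    (MvPolynomial.finSuccEquiv ℝ n : _ →+* _)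

section
variable {n : ℕ} {D : Subalgebra (MvPolynomial (Fin n) ℝ) (MvPowerSeries (Fin n) ℝ)}
    (φ : D →ₐ[MvPolynomial (Fin n) ℝ] MvPowerSeries (Fin n) ℝ)

lemma iot_apply (g : Polynomial D) : iot φ g = (ee n).symm
   ((g.map (φ : D →+* _) : Polynomial (MvPowerSeries (Fin n) ℝ)) : PowerSeries (MvPowerSeries (Fin n) ℝ)) := rfl

lemma ee_iot (g : Polynomial D) : ee n (iot φ g) =
   ((g.map (φ : D →+* _) : Polynomial (MvPowerSeries (Fin n) ℝ)) : PowerSeries (MvPowerSeries (Fin n) ℝ)) := by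
  rw [iot_apply, AlgEquiv.apply_symm_apply]

lemma iot_tht (p : MvPolynomial (Fin (n+1)) ℝ) : iot φ (tht D p) = p := by
  suffices (iot φ).comp (tht D) = algebraMap _ _ by
    rw [← algebraMap_eq_coe, ← this]; rfl
  apply MvPolynomial.ringHom_ext
  · intro r
    simp only [RingHom.comp_apply, algebraMap_eq_coe, MvPolynomial.coe_C]
    apply (ee n).injective
    rw [ee_iot, MvPowerSeries.finSuccEquiv_C]
    simp [tht, MvPolynomial.finSuccEquiv_apply, algebraMap_eq_coe]
  · intro i
    simp only [RingHom.comp_apply, algebraMap_eq_coe, MvPolynomial.coe_X]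
    apply (ee n).injective
    rw [ee_iot]
    refine Fin.cases ?_ (fun j => ?_) i
    · rw [MvPowerSeries.finSuccEquiv_X_zero]
      simp [tht, MvPolynomial.finSuccEquiv_X_zero]
    · rw [MvPowerSeries.finSuccEquiv_X_succ]
      simp [tht, MvPolynomial.finSuccEquiv_X_succ, algebraMap_eq_coe]

lemma aeval_iot {N : ℕ} (Y : Fin N → Polynomial D)
    (F : MvPolynomial (Fin N) (MvPolynomial (Fin (n+1)) ℝ)) :
    MvPolynomial.aeval (fun i => iot φ (Y i)) F = iot φ (MvPolynomial.eval₂ (tht D) Y F) := by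
  rw [MvPolynomial.hom_eval₂, MvPolynomial.aeval_def]
  congr 1
  refine RingHom.ext fun p => ?_
  rw [algebraMap_eq_coe, RingHom.comp_apply, iot_tht]

lemma iot_sub_mem {c : ℕ} (hφ : ∀ d, φ d - d ∈ ordI n c) (g : Polynomial D) :
    iot φ g - iot D.val g ∈ ordI (n+1) c := by
  rw [mem_ordI_ee]
  intro k
  rw [map_sub, ee_iot, ee_iot, map_sub, Polynomial.coeff_coe, Polynomial.coeff_coe,
    Polynomial.coeff_map, Polynomial.coeff_map]
  exact ordI_anti (Nat.sub_le _ _) (hφ _)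

lemma iot_mem (S : NashSys) (hφ : ∀ d, φ d ∈ S.Na n) (g : Polynomial D) :
    iot φ g ∈ S.Na (n+1) := by
  induction g using Polynomial.induction_on' with
  | add p q hp hq => rw [map_add]; exact add_mem hp hq
  | monomial k d =>
    rw [← Polynomial.C_mul_X_pow_eq_monomial, map_mul, map_pow]
    refine mul_mem ?_ (pow_mem ?_ _)
    · rw [iot_apply]
      simpa using S.emb n _ (hφ d)
    · have : iot φ Polynomial.X = algebraMap (MvPolynomial (Fin (n+1)) ℝ) _ (MvPolynomial.X 0) := by
        rw [algebraMap_eq_coe, ← iot_tht φ]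
        simp [tht, MvPolynomial.finSuccEquiv_X_zero]
      rw [this]
      exact Subalgebra.algebraMap_mem _ _

lemma iot_monic_ne_zero {a : Polynomial D} (ha : a.Monic) : iot φ a ≠ 0 := by
  intro h
  have h2 := ee_iot φ a
  rw [h, map_zero] at h2
  have h3 := (ha.map (φ : D →+* MvPowerSeries (Fin n) ℝ)).ne_zero
  apply h3
  have : ((0 : Polynomial (MvPowerSeries (Fin n) ℝ)) : PowerSeries (MvPowerSeries (Fin n) ℝ)) = 0 := by simp
  rw [← this] at h2
  exact (Polynomial.coe_injective _ h2).symm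

lemma iot_div {a' : Polynomial D} (hmon : a'.Monic)
    (hdist : (a'.map (D.val : D →+* MvPowerSeries (Fin n) ℝ)).IsDistinguishedAt (IsLocalRing.maximalIdeal _))
    (F : Polynomial D) (z : MvPowerSeries (Fin (n+1)) ℝ) (h : iot D.val F = iot D.val a' * z) :
    ∃ B, F = a' * B ∧ iot D.val B = z := by
  have hdiv := Polynomial.modByMonic_add_div F a'
  have hr : F %ₘ a' = 0 := by
    have h1 : ((a'.map (D.val : D →+* MvPowerSeries (Fin n) ℝ) : Polynomial (MvPowerSeries (Fin n) ℝ)) : PowerSeries (MvPowerSeries (Fin n) ℝ)) *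
        (ee n (z - iot D.val (F /ₘ a'))) =
        (((F %ₘ a').map (D.val : D →+* MvPowerSeries (Fin n) ℝ) : Polynomial (MvPowerSeries (Fin n) ℝ)) : PowerSeries (MvPowerSeries (Fin n) ℝ)) := by
      have h2 : ∀ g : Polynomial D, ((g.map (D.val : D →+* MvPowerSeries (Fin n) ℝ) : Polynomial (MvPowerSeries (Fin n) ℝ)) : PowerSeries (MvPowerSeries (Fin n) ℝ)) = ee n (iot D.val g) :=
        fun g => (ee_iot D.val g).symm
      rw [h2, h2, ← map_mul]
      congr 1
      rw [mul_sub, ← h]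
      nth_rewrite 1 [← hdiv]
      rw [map_add, map_mul]; ring
    have h3 := dist_dvd_eq_zero hdist (by
      have inj : Function.Injective (D.val : D →+* MvPowerSeries (Fin n) ℝ) := Subtype.val_injective
      rw [Polynomial.degree_map_eq_of_injective inj, Polynomial.degree_map_eq_of_injective inj]
      exact Polynomial.degree_modByMonic_lt _ hmon) _ h1
    exact (Polynomial.map_eq_zero_iff (f := (D.val : D →+* MvPowerSeries (Fin n) ℝ)) Subtype.val_injective).1 h3
  rw [hr, zero_add] at hdiv
  refine ⟨F /ₘ a', hdiv.symm, ?_⟩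
  rw [← hdiv, map_mul] at h
  exact mul_left_cancel₀ (iot_monic_ne_zero _ hmon) h

end


set_option maxHeartbeats 1000000 in
lemma artin_regular (S : NashSys) {n : ℕ} (hS : ArtinT S n) {N : ℕ}
    (y : Fin N → MvPowerSeries (Fin (n+1)) ℝ)
    (δ : MvPolynomial (Fin N) (MvPolynomial (Fin (n+1)) ℝ))
    (f : Fin N → MvPolynomial (Fin N) (MvPolynomial (Fin (n+1)) ℝ)) (K : ℕ) (hK : 1 ≤ K)
    (c : ℕ) (hc : 1 ≤ c)
    (hreg : (ee n (MvPolynomial.aeval y δ)).map (IsLocalRing.residue _) ≠ 0)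
    (hf : ∀ i, MvPolynomial.aeval y (f i) = 0) :
    ∃ y' : Fin N → MvPowerSeries (Fin (n+1)) ℝ,
      (∀ i, y' i ∈ S.Na (n+1) ∧ y' i - y i ∈ ordI (n+1) c) ∧ MvPolynomial.aeval y' δ ≠ 0 ∧
      ∀ i, ∃ v ∈ S.Na (n+1), v ∈ ordI (n+1) c ∧
        MvPolynomial.aeval y' (f i) = (MvPolynomial.aeval y' δ)^K * v := by
  classical
  set g := ee n (MvPolynomial.aeval y δ ^ K) with hg
  have hgreg : g.map (IsLocalRing.residue _) ≠ 0 := by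
    rw [hg, map_pow, map_pow]; exact pow_ne_zero _ hreg
  obtain ⟨a, h, hW⟩ := PowerSeries.exists_isWeierstrassFactorization hgreg
  have hdiv := fun i => PowerSeries.exists_isWeierstrassDivision (ee n (y i)) hgreg
  choose q r hqr using hdiv
  have hpoly := fun i => exists_poly_sub_mem_ordI c ((ee n).symm (h * q i))
  choose p hp using hpoly
  let T : Finset (MvPowerSeries (Fin n) ℝ) :=
    (Finset.univ.biUnion fun i => (r i).support.image (r i).coeff) ∪ a.support.image a.coeff
  let D := Algebra.adjoin (MvPolynomial (Fin n) ℝ) (T : Set (MvPowerSeries (Fin n) ℝ))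
  have hDfg : D.FG := ⟨T, rfl⟩
  have hinj : Function.Injective (D.val : D →+* MvPowerSeries (Fin n) ℝ) := Subtype.val_injective
  have hlift : ∀ P : Polynomial (MvPowerSeries (Fin n) ℝ), (∀ k, P.coeff k ∈ D) →
      ∃ P' : Polynomial D, P'.map (D.val : D →+* MvPowerSeries (Fin n) ℝ) = P := by
    intro P hP
    have := (Polynomial.lifts_iff_coeff_lifts (f := (D.val : D →+* MvPowerSeries (Fin n) ℝ)) P).2
      (fun k => ⟨⟨_, hP k⟩, rfl⟩)
    exact (Polynomial.mem_lifts P).1 this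
  obtain ⟨a', ha'⟩ := hlift a (by
    intro k
    by_cases hk : a.coeff k = 0
    · rw [hk]; exact zero_mem _
    · exact Algebra.subset_adjoin (by
        simp only [T, Finset.coe_union]
        right
        simp only [Finset.coe_image, Set.mem_image, Finset.mem_coe, Polynomial.mem_support_iff]
        exact ⟨k, hk, rfl⟩))
  have hr' : ∀ i, ∃ P' : Polynomial D, P'.map (D.val : D →+* MvPowerSeries (Fin n) ℝ) = r i := by
    intro i
    apply hlift
    intro k
    by_cases hk : (r i).coeff k = 0
    · rw [hk]; exact zero_mem _
    · exact Algebra.subset_adjoin (by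
        simp only [T, Finset.coe_union]
        left
        simp only [Finset.coe_biUnion, Set.mem_iUnion, Finset.coe_image, Set.mem_image, Finset.mem_coe, Polynomial.mem_support_iff]
        exact ⟨i, Finset.mem_univ i, k, hk, rfl⟩)
  choose r' hr' using hr'
  have hdist : (a'.map (D.val : D →+* MvPowerSeries (Fin n) ℝ)).IsDistinguishedAt (IsLocalRing.maximalIdeal _) := by
    rw [ha']; exact hW.isDistinguishedAt
  have hmon : a'.Monic := by
    exact Polynomial.monic_of_injective hinj hdist.monic
  obtain ⟨ψ, hψ⟩ := artinT_hom hS D hDfg c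
  set Y : Fin N → Polynomial D := fun i => r' i + a' * tht D (p i) with hY
  set α := iot D.val a' with hα
  have hαe : (ee n).symm (a : PowerSeries (MvPowerSeries (Fin n) ℝ)) = α := by rw [hα, iot_apply, ha']
  set η := (ee n).symm h with hη
  have hηu : IsUnit η := hW.isUnit.map (ee n).symm
  have hδ0 : MvPolynomial.aeval y δ ^ K = α * η := by
    apply (ee n).injective
    rw [map_mul, ← hαe, AlgEquiv.apply_symm_apply, hη, AlgEquiv.apply_symm_apply, ← hW.eq_mul]
  have hY0 : ∀ i, iot D.val (Y i) - y i ∈ Ideal.span {α} * ordI (n+1) c := by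
    intro i
    rw [Ideal.mem_span_singleton_mul]
    refine ⟨_, neg_mem (hp i), ?_⟩
    have h1 : y i = α * (ee n).symm (h * q i) + iot D.val (r' i) := by
      apply (ee n).injective
      rw [map_add, map_mul, AlgEquiv.apply_symm_apply, ← hαe, AlgEquiv.apply_symm_apply, ee_iot, hr',
        ← mul_assoc, ← hW.eq_mul]
      exact (hqr i).eq_mul_add
    rw [hY]
    simp only []
    rw [map_add (iot D.val), map_mul (iot D.val), iot_tht, ← hα]
    linear_combination h1
  have hF0 : ∀ F : MvPolynomial (Fin N) (MvPolynomial (Fin (n+1)) ℝ), ∃ z ∈ ordI (n+1) c,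
      α * z = iot D.val (MvPolynomial.eval₂ (tht D) Y F) - MvPolynomial.aeval y F := by
    intro F
    rw [← aeval_iot, ← Ideal.mem_span_singleton_mul]
    exact aeval_sub_mem _ _ _ hY0 F
  have hB : ∀ i, ∃ B, MvPolynomial.eval₂ (tht D) Y (f i) = a' * B ∧ iot D.val B ∈ ordI (n+1) c := by
    intro i
    obtain ⟨z, hz, hz2⟩ := hF0 (f i)
    rw [hf, sub_zero] at hz2
    obtain ⟨B, hB, hB2⟩ := iot_div hmon hdist _ z hz2.symm
    exact ⟨B, hB, hB2 ▸ hz⟩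
  choose B hB hB2 using hB
  obtain ⟨W, hW1, hW2⟩ : ∃ W, MvPolynomial.eval₂ (tht D) Y (δ^K) = a' * W ∧
      MvPowerSeries.constantCoeff (iot D.val W) ≠ 0 := by
    obtain ⟨z, hz, hz2⟩ := hF0 (δ^K)
    rw [map_pow, hδ0, eq_sub_iff_add_eq, ← mul_add] at hz2
    obtain ⟨W, hW, hW2⟩ := iot_div hmon hdist _ (z + η) hz2.symm
    refine ⟨W, hW, ?_⟩
    rw [hW2, map_add, mem_ordI_one.1 (ordI_anti hc hz), zero_add]
    exact ((MvPowerSeries.isUnit_iff_constantCoeff).1 hηu).ne_zero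
  have hψ1 := fun g => iot_sub_mem ψ (c := c) (fun d => (hψ d).2) g
  have hψ2 := fun g => iot_mem ψ S (fun d => (hψ d).1) g
  have hW3 : MvPowerSeries.constantCoeff (iot ψ W) ≠ 0 := by
    have := mem_ordI_one.1 (ordI_anti hc (hψ1 W))
    rw [map_sub, sub_eq_zero] at this
    rwa [this]
  obtain ⟨w, hw, hw2⟩ := nash_inv S (hψ2 W) hW3
  have hδ1 : MvPolynomial.aeval (fun i => iot ψ (Y i)) δ ^ K = iot ψ a' * iot ψ W := by
    rw [← map_pow, aeval_iot, hW1, map_mul]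
  refine ⟨fun i => iot ψ (Y i), fun i => ⟨hψ2 _, ?_⟩, ?_, fun i => ?_⟩
  · have h2 : iot D.val (Y i) - y i ∈ ordI (n+1) c :=
      (Ideal.mul_le_right : Ideal.span {α} * ordI (n+1) c ≤ ordI (n+1) c) (hY0 i)
    have h1 := add_mem (hψ1 (Y i)) h2
    rwa [sub_add_sub_cancel] at h1
  · intro h0
    rw [h0, zero_pow (by omega)] at hδ1
    refine mul_ne_zero (iot_monic_ne_zero ψ hmon) ?_ hδ1.symm
    intro h; rw [h] at hW3; simp at hW3
  · refine ⟨w * iot ψ (B i), mul_mem hw (hψ2 _), Ideal.mul_mem_left _ _ ?_, ?_⟩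
    · have h1 := add_mem (hψ1 (B i)) (hB2 i)
      rwa [sub_add_cancel] at h1
    · rw [hδ1, aeval_iot, hB, map_mul]
      linear_combination (- iot ψ a' * iot ψ (B i)) * hw2


lemma shearS_aeval {n N : ℕ} (t : Fin n → ℝ) (y : Fin N → MvPowerSeries (Fin (n+1)) ℝ)
    (F : MvPolynomial (Fin N) (MvPolynomial (Fin (n+1)) ℝ)) :
    shearS n t (MvPolynomial.aeval y F) =
      MvPolynomial.aeval (fun i => shearS n t (y i)) (MvPolynomial.map (shearP n t).toRingHom F) := by
  rw [MvPolynomial.aeval_def, MvPolynomial.aeval_def, MvPolynomial.eval₂_map]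
  have := MvPolynomial.hom_eval₂ F (algebraMap (MvPolynomial (Fin (n+1)) ℝ) (MvPowerSeries (Fin (n+1)) ℝ))
    (shearS n t : _ →+* MvPowerSeries (Fin (n+1)) ℝ) y
  refine this.trans ?_
  congr 1
  refine RingHom.ext fun p => ?_
  simp only [RingHom.comp_apply, algebraMap_eq_coe]
  exact shearS_coe t p

lemma artin_general (S : NashSys) {n : ℕ} (hS : ArtinT S n) {N : ℕ}
    (y : Fin N → MvPowerSeries (Fin (n+1)) ℝ)
    (δ : MvPolynomial (Fin N) (MvPolynomial (Fin (n+1)) ℝ))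
    (f : Fin N → MvPolynomial (Fin N) (MvPolynomial (Fin (n+1)) ℝ)) (K : ℕ) (hK : 1 ≤ K)
    (c : ℕ) (hc : 1 ≤ c) (hδ : MvPolynomial.aeval y δ ≠ 0)
    (hf : ∀ i, MvPolynomial.aeval y (f i) = 0) :
    ∃ y' : Fin N → MvPowerSeries (Fin (n+1)) ℝ,
      (∀ i, y' i ∈ S.Na (n+1) ∧ y' i - y i ∈ ordI (n+1) c) ∧ MvPolynomial.aeval y' δ ≠ 0 ∧
      ∀ i, ∃ v ∈ S.Na (n+1), v ∈ ordI (n+1) c ∧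
        MvPolynomial.aeval y' (f i) = (MvPolynomial.aeval y' δ)^K * v := by
  obtain ⟨t, ht⟩ := exists_shear_regular hδ
  have hs1 : ∀ a, shearS n t (shearS n (-t) a) = a := shearS_shearS t (-t) (by simp)
  have hs2 : ∀ a, shearS n (-t) (shearS n t a) = a := shearS_shearS (-t) t (by simp)
  rw [shearS_aeval] at ht
  obtain ⟨y', h1, h2, h3⟩ := artin_regular S hS (fun i => shearS n t (y i))
    (MvPolynomial.map (shearP n t).toRingHom δ)
    (fun i => MvPolynomial.map (shearP n t).toRingHom (f i)) K hK c hc ht (fun i => by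
      rw [← shearS_aeval, hf, map_zero])
  have key : ∀ F : MvPolynomial (Fin N) (MvPolynomial (Fin (n+1)) ℝ),
      MvPolynomial.aeval (fun i => shearS n (-t) (y' i)) F =
      shearS n (-t) (MvPolynomial.aeval y' (MvPolynomial.map (shearP n t).toRingHom F)) := by
    intro F
    rw [← hs2 (MvPolynomial.aeval _ F), shearS_aeval t]
    simp only [hs1]
  refine ⟨fun i => shearS n (-t) (y' i), fun i => ⟨S.shear _ _ _ (h1 i).1, ?_⟩, ?_, fun i => ?_⟩
  · have := shearS_ordI (-t) (h1 i).2
    rwa [map_sub, hs2] at this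
  · rw [key]
    intro h
    apply h2
    rw [← hs1 (MvPolynomial.aeval _ _), h, map_zero]
  · obtain ⟨v, hv, hv2, hv3⟩ := h3 i
    refine ⟨shearS n (-t) v, S.shear _ _ _ hv, shearS_ordI _ hv2, ?_⟩
    rw [key, key, hv3, map_mul, map_pow]

lemma algebraMap_mv_injective (n : ℕ) : Function.Injective
    (algebraMap (MvPolynomial (Fin n) ℝ) (MvPowerSeries (Fin n) ℝ)) := by
  intro p q h
  rw [algebraMap_eq_coe, algebraMap_eq_coe] at h
  exact MvPolynomial.coe_injective _ _ h

lemma artinT_step (S : NashSys) {n : ℕ} (hS : ArtinT S n) : ArtinT S (n+1) := by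
  intro N y c0
  set c := c0 + 1
  have : CharZero (MvPowerSeries (Fin (n+1)) ℝ) := algebraRat.charZero _
  have : IsDomain (MvPowerSeries (Fin (n+1)) ℝ) := NoZeroDivisors.to_isDomain _
  let H := S.Na (n+1)
  let m : Ideal H := (ordI (n+1) 1).comap (H.val : H →+* MvPowerSeries (Fin (n+1)) ℝ)
  have hm : ∀ x : H, x ∈ m ↔ MvPowerSeries.constantCoeff (x : MvPowerSeries (Fin (n+1)) ℝ) = 0 :=
    fun x => mem_ordI_one
  obtain ⟨δ, f, K, h1, h2, h3⟩ := nash_tougeron (C := MvPolynomial (Fin (n+1)) ℝ)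
    (A := MvPowerSeries (Fin (n+1)) ℝ) (H := H) (algebraMap_mv_injective _) m (by
      intro x hx
      rw [hm] at hx
      obtain ⟨b, hb, hb2⟩ := nash_inv S (1 + x).2 (by simp [hx])
      exact IsUnit.of_mul_eq_one ⟨b, hb⟩ (Subtype.ext hb2)) (by
      intro p hp0 hp1
      obtain ⟨u, hu, hu0, hu1⟩ := S.hens (n+1) (p.map (H.val : H →+* MvPowerSeries (Fin (n+1)) ℝ)) (by
          intro i; rw [Polynomial.coeff_map]; exact (p.coeff i).2) (by
          rw [Polynomial.coeff_map]; exact (hm _).1 hp0) (by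
          rw [Polynomial.coeff_map, hp1]; simp)
      refine ⟨⟨u, hu⟩, (hm _).2 hu0, ?_⟩
      apply Subtype.val_injective
      rw [Polynomial.eval_map] at hu1
      have := Polynomial.hom_eval₂ p (RingHom.id _) (H.val : H →+* MvPowerSeries (Fin (n+1)) ℝ) ⟨u, hu⟩
      rw [RingHom.comp_id] at this
      exact this.trans hu1) N y
  obtain ⟨y', hy1, hy2, hy3⟩ := artin_general S hS y δ f (K+1) (by omega) c (by omega) h1 h2
  have hval : ∀ (w : Fin N → H) (F : MvPolynomial (Fin N) (MvPolynomial (Fin (n+1)) ℝ)), ((MvPolynomial.aeval w F : H) : MvPowerSeries (Fin (n+1)) ℝ) =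
      MvPolynomial.aeval (fun i => (w i : MvPowerSeries (Fin (n+1)) ℝ)) F := by
    intro w F
    rw [← Subalgebra.val_apply, MvPolynomial.comp_aeval_apply]
    rfl
  let J : Ideal H := (ordI (n+1) c).comap (H.val : H →+* MvPowerSeries (Fin (n+1)) ℝ)
  obtain ⟨z, hz1, hz2⟩ := h3 (fun i => ⟨y' i, (hy1 i).1⟩) J
    (Ideal.comap_mono (ordI_anti (by omega))) (by
      intro h
      apply hy2
      have := congrArg (Subtype.val) h
      rw [hval] at this
      exact this) (by
      intro i
      obtain ⟨v, hv, hv2, hv3⟩ := hy3 i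
      refine ⟨MvPolynomial.aeval (fun i => (⟨y' i, (hy1 i).1⟩ : H)) δ * ⟨v, hv⟩,
        Ideal.mul_mem_left _ _ hv2, ?_⟩
      apply Subtype.val_injective
      simp only [MulMemClass.coe_mul, SubmonoidClass.coe_pow, hval]
      rw [hv3, pow_succ, mul_assoc])
  refine ⟨fun i => z i, fun i => ⟨(z i).2, ?_⟩, fun F hF => ?_⟩
  · have h4 : (z i : MvPowerSeries (Fin (n+1)) ℝ) - y' i ∈ ordI (n+1) c := hz1 i
    have := add_mem h4 (hy1 i).2
    rw [sub_add_sub_cancel] at this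
    exact ordI_anti (by omega) this
  · rw [← hval, hz2 F hF]; rfl

theorem artinT_all (S : NashSys) : ∀ n, ArtinT S n := by
  intro n
  induction n with
  | zero =>
    intro N y c
    refine ⟨y, fun i => ⟨?_, by simp⟩, fun F h => h⟩
    have : y i = algebraMap (MvPolynomial (Fin 0) ℝ) _ (MvPolynomial.C (MvPowerSeries.constantCoeff (y i))) := by
      rw [algebraMap_eq_coe]
      ext d
      rw [Subsingleton.elim d 0]
      simp
    rw [this]
    exact Subalgebra.algebraMap_mem _ _
  | succ n ih => exact artinT_step S ih

end NashArtin


noncomputable section NashAnalytic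
open Asymptotics Filter

/-- `a` is the formal Taylor series of `y` at `0`. -/
def TRel {n : ℕ} (y : (Fin n → ℝ) → ℝ) (a : MvPowerSeries (Fin n) ℝ) : Prop :=
  ∀ c : ℕ, ∃ p : MvPolynomial (Fin n) ℝ, a - (p : MvPowerSeries (Fin n) ℝ) ∈ ordI n c ∧
    (fun x => y x - MvPolynomial.eval x p) =O[𝓝 0] (fun x => ‖x‖ ^ c)

lemma pow_isBigO {n c d : ℕ} (h : c ≤ d) :
    (fun x : Fin n → ℝ => ‖x‖ ^ d) =O[𝓝 0] (fun x => ‖x‖ ^ c) := by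
  refine IsBigO.of_bound 1 ?_
  filter_upwards [Metric.ball_mem_nhds (0 : Fin n → ℝ) one_pos] with x hx
  rw [mem_ball_zero_iff] at hx
  simp only [norm_pow, norm_norm, one_mul]
  exact pow_le_pow_of_le_one (norm_nonneg _) hx.le h

lemma poly_isBigO {n c : ℕ} {p : MvPolynomial (Fin n) ℝ}
    (hp : (p : MvPowerSeries (Fin n) ℝ) ∈ ordI n c) :
    (fun x => MvPolynomial.eval x p) =O[𝓝 0] (fun x : Fin n → ℝ => ‖x‖ ^ c) := by
  simp only [MvPolynomial.eval_eq]
  refine IsBigO.fun_sum (E' := ℝ) (s := p.support) (A := fun d (x : Fin n → ℝ) => MvPolynomial.coeff d p * ∏ i ∈ d.support, x i ^ d i) fun d hd => ?_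
  have hdc : c ≤ d.degree := by
    by_contra! h
    rw [MvPolynomial.mem_support_iff] at hd
    apply hd
    simpa using hp d h
  refine IsBigO.trans ?_ (pow_isBigO hdc)
  refine IsBigO.of_bound |MvPolynomial.coeff d p| (Eventually.of_forall fun x => ?_)
  rw [norm_mul, Real.norm_eq_abs]
  refine mul_le_mul_of_nonneg_left ?_ (abs_nonneg _)
  rw [norm_prod, norm_pow, norm_norm, show d.degree = ∑ i ∈ d.support, d i from rfl, ← Finset.prod_pow_eq_pow_sum]
  refine Finset.prod_le_prod (fun _ _ => norm_nonneg _) fun i _ => ?_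
  rw [norm_pow]
  exact pow_le_pow_left₀ (norm_nonneg _) (norm_le_pi_norm x i) _

lemma poly_ordI_step {n d : ℕ} {p : MvPolynomial (Fin n) ℝ}
    (hp : (p : MvPowerSeries (Fin n) ℝ) ∈ ordI n d)
    (hO : (fun x => MvPolynomial.eval x p) =O[𝓝 0] (fun x : Fin n → ℝ => ‖x‖ ^ (d+1))) :
    (p : MvPowerSeries (Fin n) ℝ) ∈ ordI n (d+1) := by
  classical
  set q := MvPolynomial.homogeneousComponent d p with hq
  have hpq : ((p - q : MvPolynomial (Fin n) ℝ) : MvPowerSeries (Fin n) ℝ) ∈ ordI n (d+1) := by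
    intro e he
    rw [MvPolynomial.coeff_coe, MvPolynomial.coeff_sub, hq, MvPolynomial.coeff_homogeneousComponent]
    split_ifs with h
    · simp
    · have := hp e (by omega)
      rw [MvPolynomial.coeff_coe] at this
      simp [this]
  have hqO : (fun x => MvPolynomial.eval x q) =O[𝓝 0] (fun x : Fin n → ℝ => ‖x‖ ^ (d+1)) := by
    have := hO.sub (poly_isBigO hpq)
    simpa using this
  have hq0 : q = 0 := by
    apply MvPolynomial.funext
    intro v
    rw [map_zero]
    have hhom : q.IsHomogeneous d := MvPolynomial.homogeneousComponent_isHomogeneous d p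
    have ht : Tendsto (fun t : ℝ => t • v) (𝓝[≠] 0) (𝓝 0) := by
      have : Tendsto (fun t : ℝ => t • v) (𝓝 0) (𝓝 ((0:ℝ) • v)) :=
        (continuous_id.smul continuous_const).tendsto 0
      rw [zero_smul] at this
      exact this.mono_left nhdsWithin_le_nhds
    have h1 := hqO.comp_tendsto ht
    obtain ⟨C, hC⟩ := h1.bound
    have h2 : ∀ᶠ t : ℝ in 𝓝[≠] 0, |MvPolynomial.eval v q| ≤ C * ‖v‖^(d+1) * |t| := by
      filter_upwards [hC, self_mem_nhdsWithin] with t ht ht0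
      have ht0 : t ≠ 0 := ht0
      have h3 : MvPolynomial.eval (t • v) q = t ^ d * MvPolynomial.eval v q := by
        rw [MvPolynomial.eval_eq, MvPolynomial.eval_eq, Finset.mul_sum]
        refine Finset.sum_congr rfl fun e he => ?_
        have := hhom (MvPolynomial.mem_support_iff.1 he)
        rw [show Finsupp.weight 1 e = e.degree from by rw [Finsupp.degree_eq_weight_one]; rfl,
          show e.degree = ∑ i ∈ e.support, e i from rfl] at this
        simp only [Pi.smul_apply, smul_eq_mul, mul_pow, Finset.prod_mul_distrib,
          Finset.prod_pow_eq_pow_sum, this]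
        ring
      simp only [Function.comp_apply, h3, norm_mul, norm_pow, norm_norm, norm_smul, Real.norm_eq_abs] at ht
      have hpos : 0 < |t| ^ d := by positivity
      refine le_of_mul_le_mul_left ?_ hpos
      refine ht.trans (le_of_eq ?_)
      simp only [abs_norm, abs_abs]
      ring
    have h4 : Tendsto (fun t : ℝ => C * ‖v‖^(d+1) * |t|) (𝓝[≠] 0) (𝓝 0) := by
      have : Tendsto (fun t : ℝ => C * ‖v‖^(d+1) * |t|) (𝓝 0) (𝓝 (C * ‖v‖^(d+1) * |0|)) :=
        (continuous_const.mul continuous_abs).tendsto 0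
      rw [abs_zero, mul_zero] at this
      exact this.mono_left nhdsWithin_le_nhds
    have h5 := ge_of_tendsto h4 h2
    exact abs_nonpos_iff.1 h5
  rw [hq0, sub_zero] at hpq
  exact hpq

lemma poly_ordI_of_isBigO {n c : ℕ} {p : MvPolynomial (Fin n) ℝ}
    (hO : (fun x => MvPolynomial.eval x p) =O[𝓝 0] (fun x : Fin n → ℝ => ‖x‖ ^ c)) :
    (p : MvPowerSeries (Fin n) ℝ) ∈ ordI n c := by
  induction c with
  | zero => intro d hd; omega
  | succ c ih => exact poly_ordI_step (ih (hO.trans (pow_isBigO (by omega)))) hO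

lemma emb_coe {n : ℕ} : ∀ p : MvPolynomial (Fin n) ℝ, ((MvPolynomial.rename Fin.succ p : MvPolynomial (Fin (n+1)) ℝ) :
    MvPowerSeries (Fin (n+1)) ℝ) = (ee n).symm (PowerSeries.C (p : MvPowerSeries (Fin n) ℝ)) := by
  intro p
  induction p using MvPolynomial.induction_on with
  | C r =>
    apply (ee n).injective
    rw [AlgEquiv.apply_symm_apply]
    simp
  | add p q hp hq => simp only [map_add, MvPolynomial.coe_add, hp, hq]
  | mul_X p i hp =>
    rw [map_mul, MvPolynomial.coe_mul, MvPolynomial.coe_mul, hp, map_mul, map_mul]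
    congr 1
    apply (ee n).injective
    rw [AlgEquiv.apply_symm_apply]
    simp

namespace TRel
variable {n : ℕ} {y z : (Fin n → ℝ) → ℝ} {a b : MvPowerSeries (Fin n) ℝ}

lemma isBigO (h : TRel y a) {c : ℕ} (ha : a ∈ ordI n c) :
    y =O[𝓝 0] (fun x => ‖x‖ ^ c) := by
  obtain ⟨p, hp, hp2⟩ := h c
  have h1 : (p : MvPowerSeries (Fin n) ℝ) ∈ ordI n c := by
    have := sub_mem ha hp; simpa using this
  have := hp2.add (poly_isBigO h1)
  simpa using this

lemma mem_ordI_of (h : TRel y a) {c : ℕ} (hy : y =O[𝓝 0] (fun x => ‖x‖ ^ c)) : a ∈ ordI n c := by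
  obtain ⟨p, hp, hp2⟩ := h c
  have h1 := hy.sub hp2
  simp only [sub_sub_cancel] at h1
  have := add_mem hp (poly_ordI_of_isBigO h1)
  simpa using this

lemma poly (p : MvPolynomial (Fin n) ℝ) : TRel (fun x => MvPolynomial.eval x p) p := by
  intro c
  refine ⟨p, by simp, ?_⟩
  simp only [sub_self]
  exact isBigO_zero _ _

lemma add (hy : TRel y a) (hz : TRel z b) : TRel (fun x => y x + z x) (a + b) := by
  intro c
  obtain ⟨p, hp, hp2⟩ := hy c
  obtain ⟨q, hq, hq2⟩ := hz c
  refine ⟨p + q, ?_, ?_⟩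
  · have := add_mem hp hq
    rw [MvPolynomial.coe_add]
    convert this using 1; ring
  · refine (hp2.add hq2).congr_left fun x => ?_
    simp; ring

lemma bdd (hy : TRel y a) : y =O[𝓝 0] (fun _ => (1:ℝ)) := by
  have := hy.isBigO (c := 0) (by intro d hd; omega)
  simpa using this

lemma mul (hy : TRel y a) (hz : TRel z b) : TRel (fun x => y x * z x) (a * b) := by
  intro c
  obtain ⟨p, hp, hp2⟩ := hy c
  obtain ⟨q, hq, hq2⟩ := hz c
  refine ⟨p * q, ?_, ?_⟩
  · have := add_mem (Ideal.mul_mem_left _ b hp) (Ideal.mul_mem_left _ (p : MvPowerSeries (Fin n) ℝ) hq)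
    rw [MvPolynomial.coe_mul]
    convert this using 1; ring
  · have h1 := hp2.mul hz.bdd
    have h2 := (poly p).bdd.mul hq2
    simp only [mul_one] at h1
    simp only [one_mul] at h2
    refine (h1.add h2).congr_left fun x => ?_
    simp; ring

lemma congr (hy : TRel y a) (h : y =ᶠ[𝓝 0] z) : TRel z a := by
  intro c
  obtain ⟨p, hp, hp2⟩ := hy c
  refine ⟨p, hp, hp2.congr' ?_ EventuallyEq.rfl⟩
  filter_upwards [h] with x hx
  rw [hx]

lemma neg (hy : TRel y a) : TRel (fun x => - y x) (-a) := by
  have := (poly (n := n) (-1)).mul hy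
  rw [show ((-1 : MvPolynomial (Fin n) ℝ) : MvPowerSeries (Fin n) ℝ) = -1 from
    (map_neg (MvPolynomial.coeToMvPowerSeries.ringHom (σ := Fin n) (R := ℝ)) 1).trans (by simp)] at this
  simpa using this

lemma sub (hy : TRel y a) (hz : TRel z b) : TRel (fun x => y x - z x) (a - b) := by
  have := hy.add hz.neg
  simpa [sub_eq_add_neg] using this

lemma zero : TRel (fun _ : Fin n → ℝ => 0) 0 := by
  simpa using poly (n := n) 0

lemma pow (hy : TRel y a) (k : ℕ) : TRel (fun x => y x ^ k) (a ^ k) := by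
  induction k with
  | zero => simpa using poly (n := n) 1
  | succ k ih => simpa [pow_succ] using ih.mul hy

lemma sum {ι : Type*} (s : Finset ι) {Y : ι → (Fin n → ℝ) → ℝ} {A : ι → MvPowerSeries (Fin n) ℝ}
    (h : ∀ i ∈ s, TRel (Y i) (A i)) : TRel (fun x => ∑ i ∈ s, Y i x) (∑ i ∈ s, A i) := by
  classical
  induction s using Finset.induction_on with
  | empty => simpa using zero
  | insert i s hi ih =>
    simp only [Finset.sum_insert hi]
    exact (h i (by simp)).add (ih fun j hj => h j (by simp [hj]))

lemma unique (hy : TRel y a) (hz : TRel y b) : a = b := by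
  rw [← sub_eq_zero]
  apply eq_zero_of_ordI
  intro c
  apply (hy.sub hz).mem_ordI_of
  simp only [sub_self]
  exact isBigO_zero _ _

lemma apply_zero (hy : TRel y a) : y 0 = MvPowerSeries.constantCoeff a := by
  have h1 := hy.sub (poly (MvPolynomial.C (MvPowerSeries.constantCoeff a)))
  have h2 := h1.isBigO (c := 1) (by rw [mem_ordI_one]; simp)
  have h3 := h2.eq_zero_imp
  have h4 := h3.self_of_nhds (by simp)
  simp at h4
  linarith

lemma aeval {N : ℕ} {Y : Fin N → (Fin n → ℝ) → ℝ} {A : Fin N → MvPowerSeries (Fin n) ℝ}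
    (h : ∀ i, TRel (Y i) (A i)) (F : MvPolynomial (Fin N) (MvPolynomial (Fin n) ℝ)) :
    TRel (fun x => MvPolynomial.eval₂ (MvPolynomial.eval x) (fun i => Y i x) F) (MvPolynomial.aeval A F) := by
  induction F using MvPolynomial.induction_on with
  | C p => simpa [algebraMap_eq_coe] using poly p
  | add p q hp hq => simpa using hp.add hq
  | mul_X p i hp => simpa using hp.mul (h i)

lemma shear {n : ℕ} {y : (Fin (n+1) → ℝ) → ℝ} {a : MvPowerSeries (Fin (n+1)) ℝ} (hy : TRel y a)
    (t : Fin n → ℝ) :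
    TRel (fun x => y (fun i => MvPolynomial.eval x (shearV n t i))) (shearS n t a) := by
  intro c
  obtain ⟨p, hp, hp2⟩ := hy c
  refine ⟨shearP n t p, ?_, ?_⟩
  · have := shearS_ordI t hp
    rwa [map_sub, shearS_coe] at this
  · have hO : (fun x : Fin (n+1) → ℝ => (fun i => MvPolynomial.eval x (shearV n t i))) =O[𝓝 0]
        (fun x => ‖x‖ ^ 1) := by
      rw [isBigO_pi]
      intro i
      apply poly_isBigO
      rw [mem_ordI_one]
      refine Fin.cases ?_ (fun j => ?_) i <;> simp [shearV]
    have hT : Tendsto (fun x : Fin (n+1) → ℝ => (fun i => MvPolynomial.eval x (shearV n t i))) (𝓝 0) (𝓝 0) := by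
      refine hO.trans_tendsto ?_
      simpa using (continuous_norm (E := Fin (n+1) → ℝ)).tendsto 0
    have h1 := hp2.comp_tendsto hT
    have h2 := (hO.norm_left).pow c
    simp only [pow_one] at h2
    refine (h1.trans h2).congr_left fun x => ?_
    simp only [Function.comp_apply]
    congr 1
    have : (MvPolynomial.aeval (R := ℝ) x).comp (shearP n t) =
        MvPolynomial.aeval (R := ℝ) (fun i => MvPolynomial.eval x (shearV n t i)) := by
      apply MvPolynomial.algHom_ext
      intro i
      simp [shearP]
    exact (DFunLike.congr_fun this p).symm

lemma emb (hy : TRel y a) : TRel (fun x : Fin (n+1) → ℝ => y (fun i => x i.succ))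
    ((ee n).symm (PowerSeries.C a)) := by
  intro c
  have hren := emb_coe (n := n)
  obtain ⟨p, hp, hp2⟩ := hy c
  refine ⟨MvPolynomial.rename Fin.succ p, ?_, ?_⟩
  · rw [hren, ← map_sub, ← map_sub, mem_ordI_ee]
    intro k
    rw [AlgEquiv.apply_symm_apply, PowerSeries.coeff_C]
    split_ifs with h
    · rw [h]; exact hp
    · exact zero_mem _
  · have hT : Tendsto (fun x : Fin (n+1) → ℝ => (fun i : Fin n => x i.succ)) (𝓝 0) (𝓝 0) := by
      have : Continuous (fun x : Fin (n+1) → ℝ => (fun i : Fin n => x i.succ)) := by fun_prop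
      exact this.tendsto 0
    have h1 := hp2.comp_tendsto hT
    have h2 : (fun x : Fin (n+1) → ℝ => ‖(fun i : Fin n => x i.succ)‖ ^ c) =O[𝓝 0] (fun x => ‖x‖^c) := by
      refine IsBigO.of_bound 1 (Eventually.of_forall fun x => ?_)
      simp only [norm_pow, norm_norm, one_mul]
      refine pow_le_pow_left₀ (norm_nonneg _) ?_ _
      rw [pi_norm_le_iff_of_nonneg (norm_nonneg _)]
      exact fun i => norm_le_pi_norm x _
    refine (h1.trans h2).congr_left fun x => ?_
    simp only [Function.comp_apply, MvPolynomial.eval_rename]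
    rfl

end TRel

end NashAnalytic


noncomputable section NashTaylor
open Asymptotics Filter

lemma poly_ray (n : ℕ) (q : MvPolynomial (Fin n) ℝ) : ∃ Q : MvPolynomial (Fin n) ℝ,
    ∀ (x : Fin n → ℝ) (t : ℝ), HasDerivAt (fun t : ℝ => t * MvPolynomial.eval (t • x) Q)
      (MvPolynomial.eval (t • x) q) t := by
  induction q using MvPolynomial.induction_on' with
  | monomial d r =>
    refine ⟨MvPolynomial.monomial d (r / (d.degree + 1)), fun x t => ?_⟩
    have key : ∀ (s : ℝ) (r : ℝ), MvPolynomial.eval (s • x) (MvPolynomial.monomial d r) =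
        s ^ d.degree * (r * d.prod fun i e => x i ^ e) := by
      intro s r
      rw [MvPolynomial.eval_monomial]
      have : (d.prod fun i e => (s • x) i ^ e) = s ^ d.degree * d.prod fun i e => x i ^ e := by
        simp only [Finsupp.prod, Pi.smul_apply, smul_eq_mul, mul_pow, Finset.prod_mul_distrib,
          Finset.prod_pow_eq_pow_sum]
        rfl
      rw [this]; ring
    simp only [key]
    have h1 := ((hasDerivAt_pow (d.degree + 1) t).mul_const
      (r / (d.degree + 1) * d.prod fun i e => x i ^ e))
    have h0 : (d.degree : ℝ) + 1 ≠ 0 := by positivity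
    convert! h1 using 1
    · funext s; ring
    · simp; field_simp
  | add p q hp hq =>
    obtain ⟨P, hP⟩ := hp
    obtain ⟨Q, hQ⟩ := hq
    refine ⟨P + Q, fun x t => ?_⟩
    have := (hP x t).add (hQ x t)
    convert! this using 1
    · funext s; simp [mul_add]
    · simp

lemma exists_taylor (n c : ℕ) : ∀ y : (Fin n → ℝ) → ℝ, ContDiffAt ℝ (⊤ : ℕ∞) y 0 →
    ∃ p : MvPolynomial (Fin n) ℝ,
      (fun x => y x - MvPolynomial.eval x p) =O[𝓝 0] (fun x : Fin n → ℝ => ‖x‖ ^ c) := by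
  induction c with
  | zero =>
    intro y hy
    refine ⟨0, ?_⟩
    simp only [map_zero, sub_zero, pow_zero]
    exact hy.continuousAt.isBigO_one ℝ
  | succ c ih =>
    intro y hy
    have hd : ∀ i : Fin n, ContDiffAt ℝ (⊤ : ℕ∞) (fun x => fderiv ℝ y x (Pi.single i 1)) 0 := by
      intro i
      have : ContDiffAt ℝ (⊤ : ℕ∞) (fderiv ℝ y) 0 := hy.fderiv_right (by simp)
      exact this.clm_apply contDiffAt_const
    choose p hp using fun i => ih _ (hd i)
    choose Q hQ using fun i => poly_ray n (p i)
    choose C hC0 hC using fun i => (hp i).exists_nonneg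
    refine ⟨MvPolynomial.C (y 0) + ∑ i, MvPolynomial.X i * Q i, ?_⟩
    have hdiff : ∀ᶠ x in 𝓝 (0 : Fin n → ℝ), DifferentiableAt ℝ y x := by
      have : ContDiffAt ℝ 1 y 0 := hy.of_le (by exact_mod_cast le_top)
      exact (this.eventually (by simp)).mono fun x hx => hx.differentiableAt (by simp)
    have hall := hdiff.and (eventually_all.2 fun i => (hC i).bound)
    rw [Metric.eventually_nhds_iff_ball] at hall
    obtain ⟨ε, hε, hall⟩ := hall
    refine IsBigO.of_bound (∑ i, C i) ?_
    filter_upwards [Metric.ball_mem_nhds (0 : Fin n → ℝ) hε] with x hx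
    have hmem : ∀ t ∈ Set.Icc (0:ℝ) 1, t • x ∈ Metric.ball (0 : Fin n → ℝ) ε := by
      intro t ht
      rw [mem_ball_zero_iff] at hx ⊢
      rw [norm_smul, Real.norm_eq_abs, abs_of_nonneg ht.1]
      exact (mul_le_of_le_one_left (norm_nonneg _) ht.2).trans_lt hx
    have hx' : ∀ L : (Fin n → ℝ) →L[ℝ] ℝ, L x = ∑ i, x i * L (Pi.single i 1) := by
      intro L
      conv_lhs => rw [pi_eq_sum_univ' x]
      simp [map_sum, map_smul]
    have hder : ∀ t ∈ Set.Icc (0:ℝ) 1, HasDerivWithinAt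
        (fun t : ℝ => y (t • x) - MvPolynomial.eval (t • x) (MvPolynomial.C (y 0) + ∑ i, MvPolynomial.X i * Q i))
        (∑ i, x i * (fderiv ℝ y (t • x) (Pi.single i 1) - MvPolynomial.eval (t • x) (p i)))
        (Set.Icc 0 1) t := by
      intro t ht
      apply HasDerivAt.hasDerivWithinAt
      have h1 : HasDerivAt (fun t : ℝ => y (t • x)) (fderiv ℝ y (t • x) x) t := by
        have h2 := (hall _ (hmem t ht)).1.hasFDerivAt
        have h3 : HasDerivAt (fun t : ℝ => t • x) x t := by
          simpa using (hasDerivAt_id t).smul_const x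
        exact h2.comp_hasDerivAt t h3
      have h4 : HasDerivAt (fun s : ℝ => y 0 + ∑ i, x i * (s * MvPolynomial.eval (s • x) (Q i)))
          (∑ i, x i * MvPolynomial.eval (t • x) (p i)) t := by
        refine HasDerivAt.const_add _ ?_
        apply HasDerivAt.fun_sum
        intro i _
        exact (hQ i x t).const_mul _
      convert! h1.sub h4 using 1
      · funext s
        simp only [Pi.sub_apply, map_add, MvPolynomial.eval_C, map_sum, map_mul, MvPolynomial.eval_X]
        congr 2
        refine Finset.sum_congr rfl fun i _ => ?_
        simp; ring
      · rw [hx' (fderiv ℝ y (t • x)), ← Finset.sum_sub_distrib]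
        simp only [mul_sub]
    have hfin := norm_image_sub_le_of_norm_deriv_le_segment_01' (C := (∑ i, C i) * ‖x‖ ^ (c+1)) hder ?_
    · simp only [one_smul, zero_smul] at hfin
      have e0 : MvPolynomial.eval (0 : Fin n → ℝ) (MvPolynomial.C (y 0) + ∑ i, MvPolynomial.X i * Q i) = y 0 := by
        simp
      rw [e0, sub_self, sub_zero] at hfin
      simpa using hfin
    · intro t ht
      refine (norm_sum_le _ _).trans ?_
      rw [Finset.sum_mul]
      refine Finset.sum_le_sum fun i _ => ?_
      rw [norm_mul]
      have hb := (hall _ (hmem t ⟨ht.1, ht.2.le⟩)).2 i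
      have hn : ‖t • x‖ ≤ ‖x‖ := by
        rw [norm_smul, Real.norm_eq_abs, abs_of_nonneg ht.1]
        exact mul_le_of_le_one_left (norm_nonneg _) ht.2.le
      calc ‖x i‖ * _ ≤ ‖x‖ * (C i * ‖x‖ ^ c) := by
            refine mul_le_mul (norm_le_pi_norm x i) (hb.trans ?_) (norm_nonneg _) (norm_nonneg _)
            rw [norm_pow, norm_norm]
            exact mul_le_mul_of_nonneg_left (pow_le_pow_left₀ (norm_nonneg _) hn _) (hC0 i)
        _ = _ := by ring

/-- Taylor series of a smooth function. -/
lemma exists_TRel {n : ℕ} {y : (Fin n → ℝ) → ℝ} (hy : ContDiffAt ℝ (⊤ : ℕ∞) y 0) :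
    ∃ a, TRel y a := by
  choose p hp using fun c => exists_taylor n c y hy
  have coh : ∀ c d, c ≤ d → ((p d - p c : MvPolynomial (Fin n) ℝ) : MvPowerSeries (Fin n) ℝ) ∈ ordI n c := by
    intro c d h
    apply poly_ordI_of_isBigO
    refine ((hp c).sub ((hp d).trans (pow_isBigO h))).congr_left fun x => ?_
    simp
  obtain ⟨a, ha⟩ : ∃ a : MvPowerSeries (Fin n) ℝ, ∀ d, MvPowerSeries.coeff d a =
      MvPolynomial.coeff d (p (d.degree + 1)) :=
    ⟨fun d => MvPolynomial.coeff d (p (d.degree + 1)), fun d => rfl⟩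
  refine ⟨a, fun c => ⟨p c, ?_, hp c⟩⟩
  intro d hd
  have h1 := coh (d.degree + 1) c hd d (by omega)
  rw [MvPolynomial.coeff_coe, MvPolynomial.coeff_sub, sub_eq_zero] at h1
  rw [map_sub, MvPolynomial.coeff_coe, h1, ha]
  exact sub_self _

/-- Flat analytic functions vanish. -/
lemma eventually_zero_of_flat {n : ℕ} {y : (Fin n → ℝ) → ℝ} (hy : AnalyticAt ℝ y 0)
    (h : TRel y 0) : ∀ᶠ x in 𝓝 0, y x = 0 := by
  obtain ⟨P, hP⟩ := hy
  have hz : ∀ k : ℕ, ∀ v : Fin n → ℝ, (P k fun _ => v) = 0 := by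
    intro n
    refine Nat.strong_induction_on n fun k hk => ?_
    have psum_eq : P.partialSum (k + 1) = fun y => P k fun _ => y := by
      funext z
      refine Finset.sum_eq_single _ (fun b hb hnb => ?_) fun hn => ?_
      · have := Finset.mem_range_succ_iff.mp hb
        simp only [hk b (this.lt_of_ne hnb)]
      · exact False.elim (hn (Finset.mem_range.mpr (lt_add_one k)))
    have h1 := hP.isBigO_sub_partialSum_pow (k+1)
    rw [psum_eq] at h1
    simp only [zero_add] at h1
    have h2 := (h.isBigO (c := k+1) (zero_mem _)).sub h1
    simp only [sub_sub_cancel] at h2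
    exact h2.continuousMultilinearMap_apply_eq_zero
  filter_upwards [hP.eventually_hasSum_sub] with x hx
  simp only [sub_zero] at hx
  simp only [hz] at hx
  exact hx.unique hasSum_zero

end NashTaylor


noncomputable section NashSystem
open Asymptotics Filter
open scoped ContDiff

/-- Nash power series. -/
def NaSub (n : ℕ) : Subalgebra (MvPolynomial (Fin n) ℝ) (MvPowerSeries (Fin n) ℝ) where
  carrier := {a | (∃ y, AnalyticAt ℝ y 0 ∧ TRel y a) ∧ IsAlgebraic (MvPolynomial (Fin n) ℝ) a}
  mul_mem' := by
    rintro a b ⟨⟨y, hy, hya⟩, ha⟩ ⟨⟨z, hz, hzb⟩, hb⟩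
    exact ⟨⟨_, hy.fun_mul hz, hya.mul hzb⟩, ha.mul hb⟩
  add_mem' := by
    rintro a b ⟨⟨y, hy, hya⟩, ha⟩ ⟨⟨z, hz, hzb⟩, hb⟩
    exact ⟨⟨_, hy.fun_add hz, hya.add hzb⟩, ha.add hb⟩
  algebraMap_mem' := by
    intro p
    refine ⟨⟨fun x => MvPolynomial.eval x p, ?_, ?_⟩, isAlgebraic_algebraMap p⟩
    · exact AnalyticOnNhd.eval_mvPolynomial p 0 trivial
    · rw [algebraMap_eq_coe]; exact TRel.poly p

lemma hens_analytic {n N : ℕ} (Y : ℕ → (Fin n → ℝ) → ℝ) (hY : ∀ i, AnalyticAt ℝ (Y i) 0)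
    (h0 : Y 0 0 = 0) (h1 : Y 1 0 ≠ 0) (hN : 2 ≤ N) :
    ∃ u : (Fin n → ℝ) → ℝ, AnalyticAt ℝ u 0 ∧ u 0 = 0 ∧
      ∀ᶠ x in 𝓝 0, ∑ i ∈ Finset.range N, Y i x * u x ^ i = 0 := by
  set f : (Fin n → ℝ) × ℝ → ℝ := fun v => ∑ i ∈ Finset.range N, Y i v.1 * v.2 ^ i with hf
  have hfan : AnalyticAt ℝ f 0 := by
    refine Finset.analyticAt_fun_sum _ fun i _ => ?_
    refine AnalyticAt.fun_mul ?_ (analyticAt_snd.pow i)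
    exact AnalyticAt.comp (g := Y i) (f := Prod.fst) (x := (0 : (Fin n → ℝ) × ℝ)) (hY i) analyticAt_fst
  have cdf : ContDiffAt ℝ ω f 0 := hfan.contDiffAt
  have hf0 : f 0 = 0 := by
    simp only [hf, Prod.fst_zero, Prod.snd_zero]
    apply Finset.sum_eq_zero
    intro i _
    rcases Nat.eq_zero_or_pos i with rfl | hi
    · simp [h0]
    · simp [hi.ne']
  have hder : (fderiv ℝ f 0 ∘L .inr ℝ (Fin n → ℝ) ℝ) (1:ℝ) = Y 1 0 := by
    have ha : HasFDerivAt f (fderiv ℝ f 0) ((fun t : ℝ => ((0 : Fin n → ℝ), t)) 0) := by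
      exact hfan.differentiableAt.hasFDerivAt
    have hb : HasDerivAt (fun t : ℝ => ((0 : Fin n → ℝ), t)) ((0 : Fin n → ℝ), (1:ℝ)) 0 :=
      (hasDerivAt_const _ _).prodMk (hasDerivAt_id _)
    have hc := ha.comp_hasDerivAt (0:ℝ) hb
    have hd : HasDerivAt (fun t : ℝ => ∑ i ∈ Finset.range N, Y i 0 * t ^ i)
        (∑ i ∈ Finset.range N, Y i 0 * (i * 0 ^ (i-1))) 0 := by
      apply HasDerivAt.fun_sum
      intro i _
      exact (hasDerivAt_pow i 0).const_mul _
    have he := hc.unique hd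
    rw [Finset.sum_eq_single 1] at he
    · simpa using he
    · intro i _ hi
      rcases Nat.eq_zero_or_pos i with rfl | hi'
      · simp
      · have : i - 1 ≠ 0 := by omega
        simp [this]
    · intro h; simp at h; omega
  have if₂ : (fderiv ℝ f 0 ∘L .inr ℝ (Fin n → ℝ) ℝ).IsInvertible := by
    refine ⟨ContinuousLinearEquiv.unitsEquivAut ℝ (Units.mk0 _ h1), ?_⟩
    ext
    rw [hder]
    simp
  refine ⟨cdf.implicitFunction (by simp) if₂, ?_, ?_, ?_⟩
  · have := cdf.contDiffAt_implicitFunction (by simp) if₂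
    exact this.analyticAt
  · exact cdf.implicitFunction_apply_self (by simp) if₂
  · have := cdf.eventually_apply_implicitFunction (by simp) if₂
    rw [hf0] at this
    exact this

lemma analyticAt_smooth {n : ℕ} {y : (Fin n → ℝ) → ℝ} (h : AnalyticAt ℝ y 0) :
    ContDiffAt ℝ (⊤ : ℕ∞) y 0 := h.contDiffAt

/-- The system of Nash power series. -/
def nashSys : NashSys where
  Na := NaSub
  emb := by
    rintro n a ⟨⟨y, hy, hya⟩, ha⟩
    refine ⟨⟨_, ?_, hya.emb⟩, ?_⟩
    · have hlin : AnalyticAt ℝ (fun x : Fin (n+1) → ℝ => (fun i : Fin n => x i.succ)) 0 := by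
        rw [analyticAt_pi_iff]
        intro i
        exact (ContinuousLinearMap.proj (R := ℝ) (φ := fun _ : Fin (n+1) => ℝ) i.succ).analyticAt 0
      exact AnalyticAt.comp (g := y) (f := (fun x : Fin (n+1) → ℝ => (fun i : Fin n => x i.succ))) (x := 0) hy hlin
    · refine ha.ringHom_of_comp_eq (MvPolynomial.rename (R := ℝ) (Fin.succ (n := n)))
        (((ee n).symm : PowerSeries (MvPowerSeries (Fin n) ℝ) →+* MvPowerSeries (Fin (n+1)) ℝ).comp
          (PowerSeries.C (R := MvPowerSeries (Fin n) ℝ)))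
        (MvPolynomial.rename_injective _ (Fin.succ_injective n)) ?_
      apply RingHom.ext
      intro p
      simp only [RingHom.comp_apply, algebraMap_eq_coe]
      exact emb_coe p
  shear := by
    rintro n c a ⟨⟨y, hy, hya⟩, ha⟩
    refine ⟨⟨_, ?_, hya.shear c⟩, ?_⟩
    · have hlin : AnalyticAt ℝ (fun x : Fin (n+1) → ℝ => (fun i => MvPolynomial.eval x (shearV n c i))) 0 := by
        rw [analyticAt_pi_iff]
        intro i
        exact AnalyticOnNhd.eval_mvPolynomial _ 0 trivial
      refine AnalyticAt.fun_comp (g := y) ?_ hlin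
      convert! hy
      rename_i i
      refine Fin.cases ?_ (fun j => ?_) i <;> simp [shearV]
    · refine ha.ringHom_of_comp_eq (shearP n c) (shearS n c) ?_ ?_
      · refine Function.LeftInverse.injective (g := shearP n (fun i => - c i)) fun p => ?_
        exact shearP_shearP _ _ (by simp) p
      · apply RingHom.ext
        intro p
        simp only [RingHom.comp_apply, algebraMap_eq_coe]
        exact (shearS_coe c p).symm
  hens := by
    intro n p hp h0 h1
    choose Y hYa hYT using fun i => (hp i).1
    have hpd : p ≠ 0 := by
      rintro rfl; simp at h1
    obtain ⟨u, hua, hu0, hu⟩ := hens_analytic (N := p.natDegree + 2) Y hYa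
      (by rw [(hYT 0).apply_zero, h0]) (by rw [(hYT 1).apply_zero]; exact h1) (by omega)
    obtain ⟨U, hU⟩ := exists_TRel (analyticAt_smooth hua)
    have hev : p.eval U = 0 := by
      have hT : TRel (fun x => ∑ i ∈ Finset.range (p.natDegree + 2), Y i x * u x ^ i)
          (∑ i ∈ Finset.range (p.natDegree + 2), p.coeff i * U ^ i) :=
        TRel.sum _ fun i _ => (hYT i).mul (hU.pow i)
      rw [Polynomial.eval_eq_sum_range' (n := p.natDegree + 2) (by omega)]
      exact (hT.congr hu).unique TRel.zero
    refine ⟨U, ⟨⟨u, hua, hU⟩, ?_⟩, by rw [← hU.apply_zero, hu0], hev⟩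
    have hlift : p ∈ Polynomial.lifts (algebraMap (Subalgebra.algebraicClosure (MvPolynomial (Fin n) ℝ)
        (MvPowerSeries (Fin n) ℝ)) (MvPowerSeries (Fin n) ℝ)) := by
      rw [Polynomial.lifts_iff_coeff_lifts]
      exact fun i => ⟨⟨p.coeff i, (hp i).2⟩, rfl⟩
    rw [Polynomial.mem_lifts] at hlift
    obtain ⟨q, hq⟩ := hlift
    have : IsAlgebraic (Subalgebra.algebraicClosure (MvPolynomial (Fin n) ℝ)
        (MvPowerSeries (Fin n) ℝ)) U := by
      refine ⟨q, ?_, ?_⟩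
      · rintro rfl; simp at hq; exact hpd hq.symm
      · rw [Polynomial.aeval_def, ← Polynomial.eval_map, hq, hev]
    exact this.restrictScalars _

end NashSystem


noncomputable section NashFinal
open Asymptotics Filter

lemma snoc_poly {n : ℕ} (P : MvPolynomial (Fin (n+1)) ℝ) (hP : P ≠ 0) :
    ∃ q : Polynomial (MvPolynomial (Fin n) ℝ), q ≠ 0 ∧ ∀ (x : Fin n → ℝ) (t : ℝ),
      MvPolynomial.eval (Fin.snoc x t : Fin (n+1) → ℝ) P = q.eval₂ (MvPolynomial.eval x) t := by
  refine ⟨MvPolynomial.finSuccEquiv ℝ n (MvPolynomial.rename (finRotate (n+1)) P), ?_, ?_⟩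
  · rw [Ne, EmbeddingLike.map_eq_zero_iff]
    intro h
    exact hP (MvPolynomial.rename_injective _ (finRotate (n+1)).injective (by rw [h, map_zero]))
  · intro x t
    rw [← Polynomial.eval_map, ← MvPolynomial.eval_eq_eval_mv_eval', MvPolynomial.eval_rename,
      Fin.snoc_eq_cons_rotate]
    rfl

lemma poly_snoc {n : ℕ} (q : Polynomial (MvPolynomial (Fin n) ℝ)) (hq : q ≠ 0) :
    ∃ P : MvPolynomial (Fin (n+1)) ℝ, P ≠ 0 ∧ ∀ (x : Fin n → ℝ) (t : ℝ),
      MvPolynomial.eval (Fin.snoc x t : Fin (n+1) → ℝ) P = q.eval₂ (MvPolynomial.eval x) t := by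
  refine ⟨MvPolynomial.rename (finRotate (n+1)).symm ((MvPolynomial.finSuccEquiv ℝ n).symm q), ?_, ?_⟩
  · intro h
    have h2 : (MvPolynomial.finSuccEquiv ℝ n).symm q = 0 :=
      MvPolynomial.rename_injective _ (finRotate (n+1)).symm.injective (by rw [h, map_zero])
    rw [EmbeddingLike.map_eq_zero_iff] at h2
    exact hq h2
  · intro x t
    rw [← Polynomial.eval_map, MvPolynomial.eval_rename, Fin.snoc_eq_cons_rotate]
    have : (fun i => (Fin.cons t x : Fin (n+1) → ℝ) (finRotate (n+1) i)) ∘ (finRotate (n+1)).symm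
        = (Fin.cons t x : Fin (n+1) → ℝ) := by
      funext i; simp
    rw [this, MvPolynomial.eval_eq_eval_mv_eval', AlgEquiv.apply_symm_apply]

lemma TRel.mvpoly {n N : ℕ} {Y : (Fin n → ℝ) → (Fin N → ℝ)} {A : Fin N → MvPowerSeries (Fin n) ℝ}
    (h : ∀ i, TRel (fun x => Y x i) (A i)) (p : MvPolynomial (Fin N) ℝ) :
    TRel (fun x => MvPolynomial.eval (Y x) p) (MvPolynomial.aeval (R := ℝ) A p) := by
  induction p using MvPolynomial.induction_on with
  | C r =>
    have := TRel.poly (n := n) (MvPolynomial.C r)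
    simpa [MvPowerSeries.algebraMap_apply] using this
  | add p q hp hq => simpa using hp.add hq
  | mul_X p i hp => simpa using hp.mul (h i)

lemma TRel.comp2 {n N : ℕ} {Y : (Fin n → ℝ) → (Fin N → ℝ)} {A : Fin N → MvPowerSeries (Fin n) ℝ}
    (h : ∀ i, TRel (fun x => Y x i) (A i)) {t : (Fin n → ℝ) → ℝ} {T : MvPowerSeries (Fin n) ℝ}
    (ht : TRel t T) (q : Polynomial (MvPolynomial (Fin N) ℝ)) :
    TRel (fun x => q.eval₂ (MvPolynomial.eval (Y x)) (t x))
      (q.eval₂ (MvPolynomial.aeval (R := ℝ) A : MvPolynomial (Fin N) ℝ →+* MvPowerSeries (Fin n) ℝ) T) := by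
  induction q using Polynomial.induction_on' with
  | add p q hp hq => simpa [Polynomial.eval₂_add] using hp.add hq
  | monomial k p =>
    simp only [Polynomial.eval₂_monomial]
    exact (TRel.mvpoly h p).mul (ht.pow k)

lemma aeval_X_coe {n : ℕ} (p : MvPolynomial (Fin n) ℝ) :
    MvPolynomial.aeval (R := ℝ) (fun i => (MvPowerSeries.X i : MvPowerSeries (Fin n) ℝ)) p = p := by
  induction p using MvPolynomial.induction_on with
  | C r => simp [MvPowerSeries.algebraMap_apply]
  | add p q hp hq => simp [hp, hq]
  | mul_X p i hp => simp [hp]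

/-- plain evaluation -/
lemma TRel.upoly {n : ℕ} {t : (Fin n → ℝ) → ℝ} {T : MvPowerSeries (Fin n) ℝ}
    (ht : TRel t T) (q : Polynomial (MvPolynomial (Fin n) ℝ)) :
    TRel (fun x => q.eval₂ (MvPolynomial.eval x) (t x)) (Polynomial.aeval T q) := by
  induction q using Polynomial.induction_on' with
  | add p q hp hq => simpa [Polynomial.eval₂_add] using hp.add hq
  | monomial k p =>
    simp only [Polynomial.eval₂_monomial, Polynomial.aeval_monomial, algebraMap_eq_coe]
    exact (TRel.poly p).mul (ht.pow k)

lemma analytic_comp2 {n N : ℕ} {Y : (Fin n → ℝ) → (Fin N → ℝ)} (h : AnalyticAt ℝ Y 0)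
    {t : (Fin n → ℝ) → ℝ} (ht : AnalyticAt ℝ t 0) (q : Polynomial (MvPolynomial (Fin N) ℝ)) :
    AnalyticAt ℝ (fun x => q.eval₂ (MvPolynomial.eval (Y x)) (t x)) 0 := by
  induction q using Polynomial.induction_on' with
  | add p q hp hq => simpa [Polynomial.eval₂_add] using hp.fun_add hq
  | monomial k p =>
    simp only [Polynomial.eval₂_monomial]
    refine AnalyticAt.fun_mul ?_ (ht.fun_pow k)
    exact AnalyticAt.fun_comp (g := fun y => MvPolynomial.eval y p)
      (AnalyticOnNhd.eval_mvPolynomial p _ trivial) h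

lemma exists_sep {n : ℕ} {a : MvPowerSeries (Fin n) ℝ} (ha : IsAlgebraic (MvPolynomial (Fin n) ℝ) a) :
    ∃ q : Polynomial (MvPolynomial (Fin n) ℝ), Polynomial.aeval a q = 0 ∧
      Polynomial.aeval a (Polynomial.derivative q) ≠ 0 := by
  classical
  have hex : ∃ k, ∃ q : Polynomial (MvPolynomial (Fin n) ℝ), q ≠ 0 ∧ Polynomial.aeval a q = 0 ∧ q.natDegree = k := by
    obtain ⟨q, h1, h2⟩ := ha
    exact ⟨_, q, h1, h2, rfl⟩
  obtain ⟨q, hq0, hqa, hqd⟩ := Nat.find_spec hex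
  refine ⟨q, hqa, fun hd => ?_⟩
  by_cases h0 : Polynomial.derivative q = 0
  · have hdeg := Polynomial.natDegree_eq_zero_of_derivative_eq_zero h0
    rw [Polynomial.eq_C_of_natDegree_eq_zero hdeg, Polynomial.aeval_C] at hqa
    have : q.coeff 0 = 0 := (algebraMap_mv_injective n) (by rw [hqa, map_zero])
    rw [Polynomial.eq_C_of_natDegree_eq_zero hdeg, this] at hq0
    simp at hq0
  · have hdeg : q.natDegree ≠ 0 := by
      intro h
      rw [Polynomial.eq_C_of_natDegree_eq_zero h] at h0
      simp at h0
    have hlt := Polynomial.natDegree_derivative_lt hdeg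
    exact Nat.find_min hex (hqd ▸ hlt) ⟨_, h0, hd, rfl⟩

lemma root_unique {n c : ℕ} (Φ : Polynomial (MvPowerSeries (Fin n) ℝ)) {a b : MvPowerSeries (Fin n) ℝ}
    (ha : Φ.eval a = 0) (hb : Φ.eval b = 0) (hab : b - a ∈ ordI n c)
    (hd : (Polynomial.derivative Φ).eval a ∉ ordI n c) : a = b := by
  by_contra hne
  obtain ⟨k, hk⟩ := Polynomial.binomExpansion Φ a (b - a)
  rw [add_sub_cancel, ha, hb] at hk
  have h1 : (b - a) * ((Polynomial.derivative Φ).eval a + k * (b - a)) = 0 := by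
    linear_combination -hk
  rcases mul_eq_zero.1 h1 with h | h
  · exact hne (sub_eq_zero.1 h).symm
  · apply hd
    rw [eq_neg_of_add_eq_zero_left h]
    exact neg_mem (Ideal.mul_mem_left _ _ hab)

lemma isBigO_of_comp {n c : ℕ} {φ : (Fin n → ℝ) → (Fin n → ℝ)} (hφ : AnalyticAt ℝ φ 0) (h0 : φ 0 = 0)
    {D : (Fin n → ℝ) ≃L[ℝ] (Fin n → ℝ)}
    (hD : HasFDerivAt φ (D : (Fin n → ℝ) →L[ℝ] (Fin n → ℝ)) 0) {d : (Fin n → ℝ) → ℝ}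
    (hd : (fun x => d (φ x)) =O[𝓝 0] (fun x => ‖x‖ ^ c)) : d =O[𝓝 0] (fun x => ‖x‖ ^ c) := by
  have hs : HasStrictFDerivAt φ (D : (Fin n → ℝ) →L[ℝ] (Fin n → ℝ)) 0 := by
    have := hφ.hasStrictFDerivAt
    rwa [hD.fderiv] at this
  have hψ := hs.to_localInverse
  have hr := hs.eventually_right_inverse
  have hψ0 : hs.localInverse φ D 0 (φ 0) = 0 := hs.localInverse_apply_image
  rw [h0] at hψ hr hψ0
  set ψ := hs.localInverse φ D 0 with hψdef
  have hO : ψ =O[𝓝 0] (fun x => ‖x‖ ^ 1) := by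
    have := hψ.hasFDerivAt.isBigO_sub
    simpa [hψ0] using this.norm_right
  have hT : Tendsto ψ (𝓝 0) (𝓝 0) := by
    have := hψ.hasFDerivAt.continuousAt.tendsto
    rwa [hψ0] at this
  have h1 := hd.comp_tendsto hT
  have h2 := hO.norm_left.pow c
  simp only [pow_one] at h2
  refine (h1.trans h2).congr' ?_ EventuallyEq.rfl
  filter_upwards [hr] with x hx
  simp only [Function.comp_apply, hx]

end NashFinal

/-- data attached to a component of a Nash germ -/
lemma nash_component {n m : ℕ} {f : (Fin n → ℝ) → (Fin m → ℝ)} (hf : NashGerm f) (j : Fin m) :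
    ∃ (a : MvPowerSeries (Fin n) ℝ) (q : Polynomial (MvPolynomial (Fin n) ℝ)) (c : ℕ),
      TRel (fun x => f x j) a ∧ Polynomial.aeval a q = 0 ∧
      Polynomial.aeval a (Polynomial.derivative q) ∉ ordI n c ∧
      ∀ᶠ x in 𝓝 0, q.eval₂ (MvPolynomial.eval x) (f x j) = 0 := by
  have han : AnalyticAt ℝ (fun x => f x j) 0 := (analyticAt_pi_iff.1 hf.1) j
  obtain ⟨a, ha⟩ := exists_TRel (analyticAt_smooth han)
  obtain ⟨P, hP, hPe⟩ := hf.2.2 j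
  obtain ⟨q0, hq0, hq0e⟩ := snoc_poly P hP
  have halg : IsAlgebraic (MvPolynomial (Fin n) ℝ) a := by
    refine ⟨q0, hq0, ?_⟩
    refine ((ha.upoly q0).congr ?_).unique TRel.zero
    filter_upwards [hPe] with x hx
    rw [← hq0e, hx]
  obtain ⟨q, hq, hqd⟩ := exists_sep halg
  have : ∃ c, Polynomial.aeval a (Polynomial.derivative q) ∉ ordI n c := by
    by_contra! h
    exact hqd (eq_zero_of_ordI h)
  obtain ⟨c, hc⟩ := this
  refine ⟨a, q, c, ha, hq, hc, ?_⟩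
  have hT := ha.upoly q
  rw [hq] at hT
  exact eventually_zero_of_flat (analytic_comp2 analyticAt_id han q) hT

/-- Two $C^\infty$ R equivalent Nash map germs are Nash R equivalent. -/
theorem smooth_R_equiv_implies_Nash_R_equiv {n m : ℕ}
    {f g : (Fin n → ℝ) → (Fin m → ℝ)}
    (hf : NashGerm f) (hg : NashGerm g)
    (hsmooth : ∃ τ : (Fin n → ℝ) → (Fin n → ℝ),
      ContDiffAt ℝ (⊤ : ℕ∞) τ 0 ∧ τ 0 = 0 ∧
      (∃ Dτ : (Fin n → ℝ) ≃L[ℝ] (Fin n → ℝ),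
        HasFDerivAt τ (Dτ : (Fin n → ℝ) →L[ℝ] (Fin n → ℝ)) 0) ∧
      ∀ᶠ x : Fin n → ℝ in 𝓝 0, f (τ x) = g x) :
    ∃ τ' : (Fin n → ℝ) → (Fin n → ℝ),
      NashDiffeoGerm τ' ∧ ∀ᶠ x : Fin n → ℝ in 𝓝 0, f (τ' x) = g x := by
  obtain ⟨τ, hτ, hτ0, ⟨Dτ, hDτ⟩, hfg⟩ := hsmooth
  choose A q cf hAT hqA hqd hqe using nash_component hf
  choose B r cg hBT hrB hrd hre using nash_component hg
  choose T hTT using fun i : Fin n => exists_TRel (contDiffAt_pi.1 hτ i)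
  have hτt : Filter.Tendsto τ (𝓝 0) (𝓝 0) := by
    have := hτ.continuousAt.tendsto
    rwa [hτ0] at this
  -- the order of approximation
  obtain ⟨c, hc2, hcf, hcg⟩ : ∃ c : ℕ, 2 ≤ c ∧ (∀ j, cf j ≤ c) ∧ (∀ j, cg j ≤ c) := by
    refine ⟨2 + ∑ j, cf j + ∑ j, cg j, by omega, fun j => ?_, fun j => ?_⟩
    · have := Finset.single_le_sum (f := cf) (fun _ _ => Nat.zero_le _) (Finset.mem_univ j)
      omega
    · have := Finset.single_le_sum (f := cg) (fun _ _ => Nat.zero_le _) (Finset.mem_univ j)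
      omega
  obtain ⟨z, hz, hzF⟩ := artinT_all nashSys n (n + m) (Fin.append T B) c
  -- first system
  have sys1 : ∀ j, (q j).eval₂ (MvPolynomial.aeval (R := ℝ) (fun i => z (Fin.castAdd m i)) :
      MvPolynomial (Fin n) ℝ →+* MvPowerSeries (Fin n) ℝ) (z (Fin.natAdd n j)) = 0 := by
    intro j
    set θ : MvPolynomial (Fin n) ℝ →+* MvPolynomial (Fin (n+m)) (MvPolynomial (Fin n) ℝ) :=
      (MvPolynomial.aeval (R := ℝ) (fun i => (MvPolynomial.X (Fin.castAdd m i) :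
        MvPolynomial (Fin (n+m)) (MvPolynomial (Fin n) ℝ))) :
        MvPolynomial (Fin n) ℝ →ₐ[ℝ] MvPolynomial (Fin (n+m)) (MvPolynomial (Fin n) ℝ)).toRingHom with hθ
    have key : ∀ v : Fin (n+m) → MvPowerSeries (Fin n) ℝ,
        MvPolynomial.aeval v ((q j).eval₂ θ (MvPolynomial.X (Fin.natAdd n j))) =
        (q j).eval₂ (MvPolynomial.aeval (R := ℝ) (fun i => v (Fin.castAdd m i)) :
          MvPolynomial (Fin n) ℝ →+* MvPowerSeries (Fin n) ℝ) (v (Fin.natAdd n j)) := by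
      intro v
      have h1 := Polynomial.hom_eval₂ (q j) θ
        (MvPolynomial.aeval (R := MvPolynomial (Fin n) ℝ) v).toRingHom
        (MvPolynomial.X (Fin.natAdd n j))
      refine h1.trans ?_
      congr 1
      · apply MvPolynomial.ringHom_ext
        · intro s
          simp [hθ, MvPolynomial.algebraMap_apply, algebraMap_eq_coe, MvPowerSeries.algebraMap_apply]
        · intro i
          simp [hθ]
      · simp
    rw [← key]
    apply hzF
    rw [key]
    simp only [Fin.append_left, Fin.append_right]
    refine ((TRel.comp2 hTT (hBT j) (q j)).congr ?_).unique TRel.zero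
    filter_upwards [hτt.eventually (hqe j), hfg] with x hx hx2
    rw [← hx2]
    exact hx
  -- second system
  have sys2 : ∀ j, Polynomial.aeval (z (Fin.natAdd n j)) (r j) = 0 := by
    intro j
    have key : ∀ v : Fin (n+m) → MvPowerSeries (Fin n) ℝ,
        MvPolynomial.aeval v ((r j).eval₂ (MvPolynomial.C (σ := Fin (n+m))) (MvPolynomial.X (Fin.natAdd n j))) =
        Polynomial.aeval (v (Fin.natAdd n j)) (r j) := by
      intro v
      have h1 := Polynomial.hom_eval₂ (r j) (MvPolynomial.C (σ := Fin (n+m)))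
        (MvPolynomial.aeval (R := MvPolynomial (Fin n) ℝ) v).toRingHom
        (MvPolynomial.X (Fin.natAdd n j))
      refine h1.trans ?_
      rw [Polynomial.aeval_def]
      congr 1
      · apply RingHom.ext
        intro p
        simp
      · simp
    rw [← key]
    apply hzF
    rw [key]
    simp only [Fin.append_right]
    exact hrB j
  have hzB : ∀ j, B j = z (Fin.natAdd n j) := by
    intro j
    refine root_unique (c := c) ((r j).map (algebraMap _ _)) ?_ ?_ ?_ ?_
    · rw [Polynomial.eval_map]; exact hrB j
    · rw [Polynomial.eval_map]; exact sys2 j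
    · have := (hz (Fin.natAdd n j)).2
      rwa [Fin.append_right] at this
    · rw [Polynomial.derivative_map, Polynomial.eval_map]
      exact fun h => hrd j (ordI_anti (hcg j) h)
  -- the analytic solution
  choose Y hYa hYT using fun i : Fin n => (hz (Fin.castAdd m i)).1.1
  have hYalg := fun i : Fin n => (hz (Fin.castAdd m i)).1.2
  set φ : (Fin n → ℝ) → (Fin n → ℝ) := fun x i => Y i x with hφ
  have hφa : AnalyticAt ℝ φ 0 := analyticAt_pi_iff.2 hYa
  have hclose : (fun x => φ x - τ x) =O[𝓝 0] (fun x => ‖x‖ ^ c) := by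
    rw [Asymptotics.isBigO_pi]
    intro i
    refine ((hYT i).sub (hTT i)).isBigO ?_
    have := (hz (Fin.castAdd m i)).2
    rwa [Fin.append_left] at this
  have hφ0 : φ 0 = 0 := by
    have := hclose.eq_zero_imp.self_of_nhds (by simp; omega)
    rw [hτ0, sub_zero] at this
    exact this
  have hφt : Filter.Tendsto φ (𝓝 0) (𝓝 0) := by
    have := hφa.continuousAt.tendsto
    rwa [hφ0] at this
  have hDφ : HasFDerivAt φ (Dτ : (Fin n → ℝ) →L[ℝ] (Fin n → ℝ)) 0 := by
    have h1 : HasFDerivAt (fun x => φ x - τ x) (0 : (Fin n → ℝ) →L[ℝ] (Fin n → ℝ)) 0 := by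
      refine Asymptotics.IsBigO.hasFDerivAt (n := c) ?_ (by omega)
      simpa using hclose
    have h2 := h1.add hDτ
    rw [zero_add] at h2
    refine h2.congr_of_eventuallyEq (Filter.Eventually.of_forall fun x => ?_)
    simp
  refine ⟨φ, ⟨⟨hφa, hφ0, fun i => ?_⟩, Dτ, hDφ⟩, ?_⟩
  · obtain ⟨Q, hQ, hQ0⟩ := hYalg i
    obtain ⟨P, hP, hPe⟩ := poly_snoc Q hQ
    refine ⟨P, hP, ?_⟩
    have hT := (hYT i).upoly Q
    rw [hQ0] at hT
    filter_upwards [eventually_zero_of_flat (analytic_comp2 analyticAt_id (hYa i) Q) hT] with x hx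
    rw [hPe]
    exact hx
  -- finally `f ∘ φ = g`
  have hcomp : ∀ j, ∀ᶠ x in 𝓝 0, f (φ x) j = g x j := by
    intro j
    have hfja : AnalyticAt ℝ (fun x => f x j) 0 := (analyticAt_pi_iff.1 hf.1) j
    have hgja : AnalyticAt ℝ (fun x => g x j) 0 := (analyticAt_pi_iff.1 hg.1) j
    have hWa : AnalyticAt ℝ (fun x => f (φ x) j) 0 :=
      AnalyticAt.fun_comp (g := fun x => f x j) (by rw [hφ0]; exact hfja) hφa
    obtain ⟨W, hW⟩ := exists_TRel (analyticAt_smooth hWa)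
    have hlip : (fun x => f (φ x) j - g x j) =O[𝓝 0] (fun x => ‖x‖ ^ c) := by
      have h1 := hfja.hasStrictFDerivAt.isBigO_sub
      have h2 : Filter.Tendsto (fun x => (φ x, τ x)) (𝓝 0) (𝓝 ((0 : Fin n → ℝ), (0 : Fin n → ℝ))) :=
        hφt.prodMk_nhds hτt
      have h3 := (h1.comp_tendsto h2).trans hclose
      refine h3.congr' ?_ Filter.EventuallyEq.rfl
      filter_upwards [hfg] with x hx
      simp [hx]
    have hWB : W = B j := by
      refine root_unique (c := c) ((q j).map (MvPolynomial.aeval (R := ℝ) (fun i => z (Fin.castAdd m i)) :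
        MvPolynomial (Fin n) ℝ →+* MvPowerSeries (Fin n) ℝ)) ?_ ?_ ?_ ?_
      · rw [Polynomial.eval_map]
        refine ((TRel.comp2 (Y := φ) hYT hW (q j)).congr ?_).unique TRel.zero
        exact hφt.eventually (hqe j)
      · rw [Polynomial.eval_map, hzB]; exact sys1 j
      · rw [← neg_mem_iff, neg_sub]
        exact (hW.sub (hBT j)).mem_ordI_of hlip
      · rw [Polynomial.derivative_map, Polynomial.eval_map]
        intro h
        have h1 := (TRel.comp2 (Y := φ) hYT hW (Polynomial.derivative (q j))).isBigO h
        have h2 := isBigO_of_comp (d := fun x => (Polynomial.derivative (q j)).eval₂ (MvPolynomial.eval x) (f x j))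
          hφa hφ0 hDφ h1
        exact hqd j (ordI_anti (hcf j) (((hAT j).upoly _).mem_ordI_of h2))
    have hT := hW.sub (hBT j)
    rw [hWB, sub_self] at hT
    filter_upwards [eventually_zero_of_flat (hWa.fun_sub hgja) hT] with x hx
    exact sub_eq_zero.1 hx
  filter_upwards [Filter.eventually_all.2 hcomp] with x hx
  exact funext hx
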